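/- Let K be a normal Hopf subalgebra of H (i.e., K is stable under the left and right adjoint actions of H on itself). Then (K, K) is a Mackey pair of Hopf subalgebras of H. -/

import Mathlib

open TensorProduct

namespace MackeyPaper

noncomputable section

universe v

variable (k : Type) [Field k] [CharZero k] [IsAlgClosed k]
variable (H : Type) [Ring H] [HopfAlgebra k H]

/-- A subcoalgebra of `H`: a `k`-subspace `C` with `Δ(C) ⊆ C ⊗ C`. -/
def IsSubcoalgebra (C : Submodule k H) : Prop :=
  ∀ c ∈ C, Coalgebra.comul (R := k) c ∈
    LinearMap.range (TensorProduct.map C.subtype C.subtype)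

/-- A simple (nonzero, minimal) subcoalgebra of `H`. -/
def IsSimpleSubcoalgebra (C : Submodule k H) : Prop :=
  IsSubcoalgebra k H C ∧ C ≠ ⊥ ∧
    ∀ D : Submodule k H, D ≤ C → IsSubcoalgebra k H D → D ≠ ⊥ → D = C

/-- A Hopf subalgebra of `H`: a subalgebra which is a subcoalgebra and is
stable under the antipode. -/
def IsHopfSubalgebra (K : Subalgebra k H) : Prop :=
  IsSubcoalgebra k H K.toSubmodule ∧ ∀ x ∈ K, HopfAlgebra.antipode (R := k) x ∈ K

/-- `Λ` is the (two-sided) idempotent integral of the Hopf subalgebra `K`,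
i.e. the integral normalized by `ε(Λ) = 1`. -/
def IsIdempotentIntegral (K : Subalgebra k H) (Λ : H) : Prop :=
  Λ ∈ K ∧ Coalgebra.counit (R := k) Λ = 1 ∧
    ∀ x ∈ K, x * Λ = Coalgebra.counit (R := k) x • Λ ∧
      Λ * x = Coalgebra.counit (R := k) x • Λ

/-- A cocommutative element of `H`; the cocommutative elements of `H` form
the character ring `C(H^*)`. -/
def IsCocomm (x : H) : Prop :=
  (TensorProduct.comm k H H) (Coalgebra.comul (R := k) x) = Coalgebra.comul (R := k) x

/-- The character ring `C(H^*)`, i.e. the space of cocommutative elements of `H`,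
as a `k`-subspace of `H`. -/
def charRing : Submodule k H :=
  LinearMap.ker ((TensorProduct.comm k H H).toLinearMap ∘ₗ Coalgebra.comul (R := k)
      - Coalgebra.comul (R := k))

/-- `d` is the irreducible character (of `H^*`) associated to the simple
subcoalgebra `C`: the unique cocommutative element of `C` whose counit is the
positive square root of `dim_k C`. -/
def IsCharacterOf (d : H) (C : Submodule k H) : Prop :=
  d ∈ C ∧ IsCocomm k H d ∧
    Coalgebra.counit (R := k) d = ((Nat.sqrt (Module.finrank k ↥C) : ℕ) : k)

/-- The right coset `CK` of a subcoalgebra `C`, i.e. the subspace `C·K`. -/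
def CKsub (K : Subalgebra k H) (C : Submodule k H) : Submodule k H :=
  C * K.toSubmodule

/-- The conjugate Hopf subalgebra `ᶜK` of `K` by a simple subcoalgebra `C`
(with associated irreducible character `c`): the span of all simple
subcoalgebras of `H` whose irreducible character `d` satisfies
`d·c·Λ_K = ε(d)·c·Λ_K`.  (The condition is stated for all cocommutative
elements of `C` resp. `D`; this is equivalent, since the cocommutative
elements of a simple subcoalgebra are exactly the scalar multiples of its
irreducible character.) -/
def conjK (K : Subalgebra k H) (Λ : H) (C : Submodule k H) : Submodule k H :=
  sSup {D : Submodule k H | IsSimpleSubcoalgebra k H D ∧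
    ∀ d ∈ D, IsCocomm k H d → ∀ c ∈ C, IsCocomm k H c →
      d * (c * Λ) = Coalgebra.counit (R := k) d • (c * Λ)}

/-- A complete irredundant system of representatives (by simple subcoalgebras)
of the double cosets `L\H/K`.  (Taking `L = ⊥` gives a system of
representatives of the right cosets `H/K`.) -/
def IsDoubleCosetReps (L K : Subalgebra k H) {ι : Type} (rep : ι → Submodule k H) : Prop :=
  (∀ i, IsSimpleSubcoalgebra k H (rep i)) ∧
  (∀ i j, L.toSubmodule * rep i * K.toSubmodule = L.toSubmodule * rep j * K.toSubmodule
      → i = j) ∧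
  (∀ C : Submodule k H, IsSimpleSubcoalgebra k H C →
      ∃ i, C ≤ L.toSubmodule * rep i * K.toSubmodule)

section Ind

variable (K : Subalgebra k H) (M : Type v) [AddCommGroup M] [Module k M]
  [Module ↥K M] [IsScalarTower k ↥K M]

/-- The relations defining the induced module `H ⊗_K M` as a quotient of
`H ⊗_k M`: the `H`-submodule generated by the elements `a ⊗ m - 1 ⊗ a·m`
for `a ∈ K` (equivalently, spanned by all `h·a ⊗ m - h ⊗ a·m`). -/
def indRel : Submodule H (H ⊗[k] M) :=
  Submodule.span H {z | ∃ (a : ↥K) (m : M),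
    z = (a : H) ⊗ₜ[k] m - (1 : H) ⊗ₜ[k] (a • m)}

/-- The induced module `M↑_K^H = H ⊗_K M`, a left `H`-module. -/
abbrev Ind := (H ⊗[k] M) ⧸ indRel k H K M

variable (C : Submodule k H)

/-- The underlying space `CK ⊗_k M` of which the conjugate module `ᶜM` is a
quotient. -/
def CKM : Type _ := ↥(CKsub k H K C) ⊗[k] M

instance : AddCommGroup (CKM k H K M C) :=
  inferInstanceAs (AddCommGroup (↥(CKsub k H K C) ⊗[k] M))

instance : Module k (CKM k H K M C) :=
  inferInstanceAs (Module k (↥(CKsub k H K C) ⊗[k] M))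

/-- The pure tensor `x ⊗ m` as an element of `CK ⊗_k M`. -/
def ckmk (x : ↥(CKsub k H K C)) (m : M) : CKM k H K M C := x ⊗ₜ[k] m

/-- The relations defining the conjugate module `ᶜM = CK ⊗_K M` as a quotient
of `CK ⊗_k M`: `x·a ⊗ m - x ⊗ a·m` for `a ∈ K`. -/
def conjRel : Submodule k (CKM k H K M C) :=
  Submodule.span k {z | ∃ (x : ↥(CKsub k H K C)) (a : ↥K) (m : M)
    (hxa : (x : H) * (a : H) ∈ CKsub k H K C),
    z = ckmk k H K M C ⟨(x : H) * (a : H), hxa⟩ m - ckmk k H K M C x (a • m)}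

/-- The conjugate module `ᶜM := CK ⊗_K M`. -/
abbrev ConjM := CKM k H K M C ⧸ conjRel k H K M C

/-- The canonical copy of the conjugate module `ᶜM = CK ⊗_K M` inside
`H ⊗_K M` (the image of `CK ⊗_K M` under multiplication; this is indeed a
copy of `ᶜM` since `H` is a free right `K`-module and `CK` is one of the
coset summands). -/
def conjMsub : Submodule k (Ind k H K M) :=
  Submodule.span k {z | ∃ (x : H) (_ : x ∈ CKsub k H K C) (m : M),
    z = Submodule.Quotient.mk (x ⊗ₜ[k] m)}

end Ind

section Comp

variable (L K : Subalgebra k H) (Λ : H) (C : Submodule k H)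
variable (M : Type v) [AddCommGroup M] [Module k M] [Module ↥K M] [IsScalarTower k ↥K M]

/-- The underlying space `L ⊗_k (CK ⊗_k M)`. -/
def LCM : Type _ := ↥L ⊗[k] CKM k H K M C

instance : AddCommGroup (LCM k H L K C M) :=
  inferInstanceAs (AddCommGroup (↥L ⊗[k] CKM k H K M C))

instance : Module k (LCM k H L K C M) :=
  inferInstanceAs (Module k (↥L ⊗[k] CKM k H K M C))

/-- The pure tensor `l ⊗ w` as an element of `L ⊗_k (CK ⊗_k M)`. -/
def lcmk (l : ↥L) (w : CKM k H K M C) : LCM k H L K C M := l ⊗ₜ[k] w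

/-- The relations defining `L ⊗_{L ∩ ᶜK} ᶜM` as a quotient of
`L ⊗_k (CK ⊗_k M)`: the balancedness relations over `L ∩ ᶜK` (first set),
together with (the image of) the relations defining `ᶜM = CK ⊗_K M`
(second set). -/
def compRel : Submodule k (LCM k H L K C M) :=
  Submodule.span k
    ({z | ∃ (l : ↥L) (a : H) (haL : a ∈ L) (_ : a ∈ conjK k H K Λ C)
        (x : ↥(CKsub k H K C)) (m : M) (hax : a * (x : H) ∈ CKsub k H K C),
        z = lcmk k H L K C M ⟨(l : H) * a, mul_mem l.2 haL⟩ (ckmk k H K M C x m)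
          - lcmk k H L K C M l (ckmk k H K M C ⟨a * (x : H), hax⟩ m)} ∪
     {z | ∃ (l : ↥L) (x : ↥(CKsub k H K C)) (a : ↥K) (m : M)
        (hxa : (x : H) * (a : H) ∈ CKsub k H K C),
        z = lcmk k H L K C M l (ckmk k H K M C ⟨(x : H) * (a : H), hxa⟩ m)
          - lcmk k H L K C M l (ckmk k H K M C x (a • m))})

/-- The module `L ⊗_{L ∩ ᶜK} ᶜM` (a left `L`-module via multiplication on the
first tensor factor). -/
abbrev Comp := LCM k H L K C M ⧸ compRel k H L K Λ C M

end Comp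

open DirectSum

section Mackey

variable (L K : Subalgebra k H) (Λ : H)

/-- The Mackey isomorphism property for the pair `(L, K)` at the `K`-module
`M`: for any system of double coset representatives, the left-multiplication
map `⊕_C L ⊗_{L ∩ ᶜK} ᶜM → M↑_K^H↓_L^H`, `l ⊗ v ↦ l·v`, is an isomorphism of
`L`-modules.  (A `k`-linear map satisfying the displayed formula on the
spanning elements is automatically `L`-equivariant for the evident
`L`-actions, so this property is stated for `k`-linear maps.) -/
def MackeyAt (M : Type v) [AddCommGroup M] [Module k M] [Module ↥K M]
    [IsScalarTower k ↥K M] [Module.Finite k M] : Prop :=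
  ∀ (ι : Type) [DecidableEq ι] (rep : ι → Submodule k H),
    IsDoubleCosetReps k H L K rep →
    ∃ π : (⨁ i : ι, Comp k H L K Λ (rep i) M) →ₗ[k] Ind k H K M,
      Function.Bijective π ∧
      ∀ (i : ι) (l : ↥L) (x : ↥(CKsub k H K (rep i))) (m : M),
        π (DirectSum.of (fun i => Comp k H L K Λ (rep i) M) i
            (Submodule.Quotient.mk (lcmk k H L K (rep i) M l (ckmk k H K M (rep i) x m)))) =
          Submodule.Quotient.mk (((l : H) * (x : H)) ⊗ₜ[k] m)

/-- `(L, K)` is a Mackey pair of Hopf subalgebras of `H` (here `Λ` is the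
idempotent integral of `K`): for every finite-dimensional `K`-module `M` the
left-multiplication homomorphism `π_M` is an isomorphism. -/
def IsMackeyPair : Prop :=
  ∀ (M : Type v) [AddCommGroup M] [Module k M] [Module ↥K M]
    [IsScalarTower k ↥K M] [Module.Finite k M], MackeyAt k H L K Λ M

end Mackey


section Statements

/-- The left adjoint action `h ⊗ x ↦ ∑ h₁ x S(h₂)` of `H` on itself, as a
linear map. -/
def adActL : H →ₗ[k] H →ₗ[k] H :=
  (TensorProduct.lift
    (LinearMap.mk₂ k
      (fun a b => (LinearMap.mulRight k (HopfAlgebra.antipode (R := k) b)).comp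
        (LinearMap.mulLeft k a))
      (fun a a' b => by ext x; simp [add_mul])
      (fun c a b => by ext x; simp [smul_mul_assoc])
      (fun a b b' => by ext x; simp [mul_add])
      (fun c a b => by ext x; simp [mul_smul_comm]))) ∘ₗ
    Coalgebra.comul (R := k)

/-- The right adjoint action `h ⊗ x ↦ ∑ S(h₁) x h₂` of `H` on itself, as a
linear map. -/
def adActR : H →ₗ[k] H →ₗ[k] H :=
  (TensorProduct.lift
    (LinearMap.mk₂ k
      (fun a b => (LinearMap.mulRight k b).comp
        (LinearMap.mulLeft k (HopfAlgebra.antipode (R := k) a)))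
      (fun a a' b => by ext x; simp [add_mul])
      (fun c a b => by ext x; simp [smul_mul_assoc])
      (fun a b b' => by ext x; simp [mul_add])
      (fun c a b => by ext x; simp [mul_smul_comm]))) ∘ₗ
    Coalgebra.comul (R := k)

/-- A normal Hopf subalgebra of `H`: a Hopf subalgebra stable under both the
left and the right adjoint action of `H` on itself. -/
def IsNormalHopfSubalgebra (K : Subalgebra k H) : Prop :=
  IsHopfSubalgebra k H K ∧
    ∀ h : H, ∀ x ∈ K, adActL k H h x ∈ K ∧ adActR k H h x ∈ K

section Hits

open Coalgebra HopfAlgebra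

variable {F A : Type*} [Field F] [Ring A] [HopfAlgebra F A]

/-- The right hit action `x ↼ f = f(x₁) x₂` of a functional. -/
def hitR (f : A →ₗ[F] F) : A →ₗ[F] A :=
  (TensorProduct.lid F A).toLinearMap ∘ₗ f.rTensor A ∘ₗ comul

/-- The left hit action `f ⇀ x = x₁ f(x₂)` of a functional. -/
def hitL (f : A →ₗ[F] F) : A →ₗ[F] A :=
  (TensorProduct.rid F A).toLinearMap ∘ₗ f.lTensor A ∘ₗ comul

theorem hitR_repr {ι : Type*} {x : A} (r : Repr F x ι) (f : A →ₗ[F] F) :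
    hitR f x = ∑ i ∈ r.index, f (r.left i) • r.right i := by
  simp [hitR, ← r.eq]

theorem hitL_repr {ι : Type*} {x : A} (r : Repr F x ι) (f : A →ₗ[F] F) :
    hitL f x = ∑ i ∈ r.index, f (r.right i) • r.left i := by
  simp [hitL, ← r.eq]

theorem hitR_counit (x : A) : hitR (counit : A →ₗ[F] F) x = x := by
  simp [hitR]

theorem hitL_counit (x : A) : hitL (counit : A →ₗ[F] F) x = x := by
  simp [hitL]

/-- Evaluating `f ⊗ g` on `Δ x`. -/
theorem apply_hitR (f g : A →ₗ[F] F) (x : A) :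
    f (hitR g x) = g (hitL f x) := by
  simp [hitR_repr (ℛ F x), hitL_repr (ℛ F x), mul_comm]

theorem counit_hitR (f : A →ₗ[F] F) (x : A) : counit (R := F) (hitR f x) = f x := by
  rw [apply_hitR, hitL_counit]

theorem counit_hitL (f : A →ₗ[F] F) (x : A) : counit (R := F) (hitL f x) = f x := by
  rw [← apply_hitR, hitR_counit]

/-- The convolution product of functionals. -/
def convol (f g : A →ₗ[F] F) : A →ₗ[F] F :=
  LinearMap.mul' F F ∘ₗ TensorProduct.map f g ∘ₗ comul

theorem convol_repr {ι : Type*} {x : A} (r : Repr F x ι) (f g : A →ₗ[F] F) :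
    convol f g x = ∑ i ∈ r.index, f (r.left i) * g (r.right i) := by
  simp [convol, ← r.eq]

theorem convol_apply (f g : A →ₗ[F] F) (x : A) : convol f g x = f (hitL g x) := by
  simp [convol_repr (ℛ F x), hitL_repr (ℛ F x), mul_comm]

theorem convol_apply' (f g : A →ₗ[F] F) (x : A) : convol f g x = g (hitR f x) := by
  rw [convol_apply, apply_hitR]

theorem convol_assoc (f g h : A →ₗ[F] F) : convol (convol f g) h = convol f (convol g h) :=
  congrArg WithConv.ofConv
    (mul_assoc (WithConv.toConv f) (WithConv.toConv g) (WithConv.toConv h))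

theorem eq_of_forall_dual {x y : A} (h : ∀ f : A →ₗ[F] F, f x = f y) : x = y := by
  rw [← sub_eq_zero, ← Module.forall_dual_apply_eq_zero_iff F]
  intro f
  simpa [sub_eq_zero] using h f

theorem hitR_hitR (f g : A →ₗ[F] F) (x : A) : hitR f (hitR g x) = hitR (convol g f) x := by
  refine eq_of_forall_dual (F := F) fun e => ?_
  rw [← convol_apply', ← convol_apply', ← convol_apply', convol_assoc]

theorem hitL_hitL (f g : A →ₗ[F] F) (x : A) : hitL f (hitL g x) = hitL (convol f g) x := by
  refine eq_of_forall_dual (F := F) fun e => ?_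
  rw [← convol_apply, ← convol_apply, ← convol_apply, convol_assoc]

theorem hitR_smul (c : F) (f : A →ₗ[F] F) (x : A) : hitR (c • f) x = c • hitR f x := by
  simp [hitR_repr (ℛ F x), Finset.smul_sum, mul_smul]

theorem hitL_smul (c : F) (f : A →ₗ[F] F) (x : A) : hitL (c • f) x = c • hitL f x := by
  simp [hitL_repr (ℛ F x), Finset.smul_sum, mul_smul]

theorem hitR_sum {ι : Type*} (s : Finset ι) (f : ι → A →ₗ[F] F) (x : A) :
    hitR (∑ i ∈ s, f i) x = ∑ i ∈ s, hitR (f i) x := by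
  simp [hitR_repr (ℛ F x), Finset.sum_smul]
  exact Finset.sum_comm

theorem hitL_sum {ι : Type*} (s : Finset ι) (f : ι → A →ₗ[F] F) (x : A) :
    hitL (∑ i ∈ s, f i) x = ∑ i ∈ s, hitL (f i) x := by
  simp [hitL_repr (ℛ F x), Finset.sum_smul]
  exact Finset.sum_comm

/-- `Δ x` in terms of a basis of the right factor. -/
theorem comul_eq_sum_hitL {ι : Type*} [Fintype ι] (b : Module.Basis ι F A) (x : A) :
    comul (R := F) x = ∑ i, hitL (b.coord i) x ⊗ₜ[F] b i := by
  conv_lhs => rw [← (ℛ F x).eq]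
  simp_rw [hitL_repr (ℛ F x), TensorProduct.sum_tmul, TensorProduct.smul_tmul]
  rw [Finset.sum_comm]
  refine Finset.sum_congr rfl fun j _ => ?_
  rw [← TensorProduct.tmul_sum]
  congr 1
  exact (b.sum_repr _).symm

/-- `Δ x` in terms of a basis of the left factor. -/
theorem comul_eq_sum_hitR {ι : Type*} [Fintype ι] (b : Module.Basis ι F A) (x : A) :
    comul (R := F) x = ∑ i, b i ⊗ₜ[F] hitR (b.coord i) x := by
  conv_lhs => rw [← (ℛ F x).eq]
  simp_rw [hitR_repr (ℛ F x), TensorProduct.tmul_sum, ← TensorProduct.smul_tmul]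
  rw [Finset.sum_comm]
  refine Finset.sum_congr rfl fun j _ => ?_
  rw [← TensorProduct.sum_tmul]
  congr 1
  exact (b.sum_repr _).symm

theorem hitR_mul {ι : Type*} {h : A} (r : Repr F h ι) (f : A →ₗ[F] F) (y : A) :
    hitR f (h * y) =
      ∑ i ∈ r.index, r.right i * hitR (f ∘ₗ LinearMap.mulLeft F (r.left i)) y := by
  rw [hitR_repr (r.mul (ℛ F y))]
  simp [hitR_repr (ℛ F y), Finset.sum_product, Finset.mul_sum]

theorem hitL_mul {ι : Type*} {h : A} (r : Repr F h ι) (f : A →ₗ[F] F) (y : A) :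
    hitL f (y * h) =
      ∑ i ∈ r.index, hitL (f ∘ₗ LinearMap.mulRight F (r.right i)) y * r.left i := by
  rw [hitL_repr ((ℛ F y).mul r)]
  simp [hitL_repr (ℛ F y), Finset.sum_product_right, Finset.sum_mul]

open WithConv in
/-- The antipode reverses the comultiplication. -/
theorem comul_antipode (a : A) :
    comul (R := F) (antipode F a) =
      TensorProduct.map (antipode F) (antipode F) (TensorProduct.comm F A A (comul a)) := by
  let i₁ : A →ₐ[F] A ⊗[F] A := Algebra.TensorProduct.includeLeft
  let i₂ : A →ₐ[F] A ⊗[F] A := Algebra.TensorProduct.includeRight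
  have key (i : A →ₐ[F] A ⊗[F] A) :
      toConv (i.toLinearMap ∘ₗ antipode F) * toConv i.toLinearMap = 1 := by
    have := LinearMap.algHom_comp_convMul_distrib (C := A) (R := F) i
      (toConv (antipode F)) (toConv LinearMap.id)
    rw [LinearMap.antipode_mul_id] at this
    rw [toConv_injective.eq_iff.symm] at this
    refine this.symm.trans ?_
    ext x
    simp
  have hδ : toConv (comul : A →ₗ[F] A ⊗[F] A) = toConv i₁.toLinearMap * toConv i₂.toLinearMap := by
    ext x
    rw [(ℛ F x).convMul_apply]
    simp [i₁, i₂, (ℛ F x).eq]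
  have hG : toConv (TensorProduct.map (antipode F) (antipode F) ∘ₗ
      (TensorProduct.comm F A A).toLinearMap ∘ₗ comul) =
      toConv (i₂.toLinearMap ∘ₗ antipode F) * toConv (i₁.toLinearMap ∘ₗ antipode F) := by
    ext x
    rw [(ℛ F x).convMul_apply]
    simp [i₁, i₂, ← (ℛ F x).eq]
  have h1 : toConv (TensorProduct.map (antipode F) (antipode F) ∘ₗ
      (TensorProduct.comm F A A).toLinearMap ∘ₗ comul) * toConv comul = 1 := by
    rw [hG, hδ, mul_assoc, ← mul_assoc (toConv (i₁.toLinearMap ∘ₗ antipode F)), key, one_mul, key]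
  have := left_inv_eq_right_inv h1 LinearMap.comul_right_inv
  exact (congrArg (fun f => f.ofConv a) this).symm

theorem hitR_antipode (f : A →ₗ[F] F) (x : A) :
    hitR f (antipode F x) = antipode F (hitL (f ∘ₗ antipode F) x) := by
  rw [hitL_repr (ℛ F x)]
  simp [hitR, comul_antipode, ← (ℛ F x).eq]

theorem hitL_antipode (f : A →ₗ[F] F) (x : A) :
    hitL f (antipode F x) = antipode F (hitR (f ∘ₗ antipode F) x) := by
  rw [hitR_repr (ℛ F x)]
  simp [hitL, comul_antipode, ← (ℛ F x).eq]

variable (F) in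
/-- The square of the antipode. -/
def antipodeSq : A →ₗ[F] A := antipode F ∘ₗ antipode F

theorem antipodeSq_apply (x : A) : antipodeSq F x = antipode F (antipode F x) := rfl

theorem antipodeSq_mul (x y : A) : antipodeSq F (x * y) = antipodeSq F x * antipodeSq F y := by
  simp [antipodeSq, antipode_mul_antidistrib]

theorem antipodeSq_one : antipodeSq F (1 : A) = 1 := by simp [antipodeSq]

theorem counit_antipodeSq (x : A) : counit (R := F) (antipodeSq F x) = counit x := by
  simp [antipodeSq]

theorem hitR_antipodeSq (f : A →ₗ[F] F) (x : A) :
    hitR f (antipodeSq F x) = antipodeSq F (hitR (f ∘ₗ antipodeSq F) x) := by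
  rw [antipodeSq_apply, hitR_antipode, hitL_antipode]; rfl

theorem hitL_antipodeSq (f : A →ₗ[F] F) (x : A) :
    hitL f (antipodeSq F x) = antipodeSq F (hitL (f ∘ₗ antipodeSq F) x) := by
  rw [antipodeSq_apply, hitL_antipode, hitR_antipode]; rfl

theorem sum_antipodeSq_mul_antipode {ι : Type*} {y : A} (r : Repr F y ι) :
    ∑ i ∈ r.index, antipodeSq F (r.right i) * antipode F (r.left i) =
      algebraMap F A (counit y) := by
  have := congrArg (antipode F) (sum_mul_antipode_eq_algebraMap_counit r)
  simpa [antipodeSq, antipode_mul_antidistrib, Algebra.algebraMap_eq_smul_one] using this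

theorem sum_antipode_mul_antipodeSq {ι : Type*} {y : A} (r : Repr F y ι) :
    ∑ i ∈ r.index, antipode F (r.right i) * antipodeSq F (r.left i) =
      algebraMap F A (counit y) := by
  have := congrArg (antipode F) (sum_antipode_mul_eq_algebraMap_counit r)
  simpa [antipodeSq, antipode_mul_antidistrib, Algebra.algebraMap_eq_smul_one] using this

end Hits

section Integrals

open Coalgebra HopfAlgebra

variable {F A : Type*} [Field F] [Ring A] [HopfAlgebra F A]

variable (F A) in
/-- The functional `h ↦ Tr(x ↦ h S²(x))`. -/
def sqTraceL : A →ₗ[F] F :=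
  LinearMap.trace F A ∘ₗ LinearMap.lcomp F A (antipodeSq F) ∘ₗ LinearMap.mul F A

variable (F A) in
/-- The functional `h ↦ Tr(x ↦ S²(x) h)`. -/
def sqTraceR : A →ₗ[F] F :=
  LinearMap.trace F A ∘ₗ LinearMap.lcomp F A (antipodeSq F) ∘ₗ (LinearMap.mul F A).flip

theorem sqTraceL_apply (h : A) :
    sqTraceL F A h = LinearMap.trace F A (LinearMap.mulLeft F h ∘ₗ antipodeSq F) := rfl

theorem sqTraceR_apply (h : A) :
    sqTraceR F A h = LinearMap.trace F A (LinearMap.mulRight F h ∘ₗ antipodeSq F) := rfl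

theorem sum_basis_mul {ι : Type*} [Fintype ι] (b : Module.Basis ι F A) (f : A →ₗ[F] F) (x y : A) :
    ∑ j, f (x * b j) * b.coord j y = f (x * y) := by
  conv_rhs => rw [← b.sum_repr y, Finset.mul_sum, map_sum]
  exact Finset.sum_congr rfl fun j _ => by simp [mul_comm]

theorem sqTraceL_hitR [FiniteDimensional F A] (f : A →ₗ[F] F) (h : A) :
    sqTraceL F A (hitR f h) = f 1 * sqTraceL F A h := by
  let b := Module.finBasis F A
  let T := LinearMap.mulLeft F h ∘ₗ antipodeSq F
  let p j := f ∘ₗ LinearMap.mulRight F (b j)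
  let q j := b.coord j ∘ₗ antipode F
  have h1 : LinearMap.mulLeft F (hitR f h) ∘ₗ antipodeSq F =
      ∑ j, hitR (p j) ∘ₗ T ∘ₗ hitR (q j) := by
    ext x
    have h3 (i : A × A) : ∑ j, convol (q j)
        ((p j ∘ₗ LinearMap.mulLeft F ((ℛ F h).left i)) ∘ₗ antipodeSq F) =
        f ((ℛ F h).left i) • counit := by
      ext y
      have := congrArg (fun z => f ((ℛ F h).left i * z)) (sum_antipodeSq_mul_antipode (ℛ F y))
      simp only [Algebra.algebraMap_eq_smul_one, Finset.mul_sum, map_sum] at this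
      simp only [LinearMap.sum_apply, convol_repr (ℛ F y)]
      rw [Finset.sum_comm]
      simp only [p, q, LinearMap.comp_apply, LinearMap.mulRight_apply, LinearMap.mulLeft_apply]
      simp_rw [mul_comm (b.coord _ _), sum_basis_mul, mul_assoc, this]
      simp [mul_comm]
    simp only [LinearMap.sum_apply, LinearMap.comp_apply, LinearMap.mulLeft_apply, T]
    simp_rw [hitR_mul (ℛ F h), hitR_antipodeSq, hitR_hitR]
    rw [Finset.sum_comm]
    simp_rw [← Finset.mul_sum, ← map_sum, ← hitR_sum, h3, hitR_smul, hitR_counit]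
    simp [hitR_repr (ℛ F h), Finset.sum_mul]
  have h2 : ∑ j, hitR (q j) ∘ₗ hitR (p j) = f 1 • LinearMap.id := by
    ext x
    simp only [LinearMap.sum_apply, LinearMap.comp_apply, hitR_hitR, ← hitR_sum]
    have : ∑ j, convol (p j) (q j) = f 1 • counit := by
      ext y
      have := congrArg f (sum_mul_antipode_eq_algebraMap_counit (ℛ F y))
      simp only [Algebra.algebraMap_eq_smul_one, map_sum] at this
      simp only [LinearMap.sum_apply, convol_repr (ℛ F y)]
      rw [Finset.sum_comm]
      simp only [p, q, LinearMap.comp_apply, LinearMap.mulRight_apply]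
      simp_rw [sum_basis_mul, this]
      simp [mul_comm]
    rw [this, hitR_smul, hitR_counit]; simp
  rw [sqTraceL_apply, h1, map_sum, sqTraceL_apply]
  simp_rw [fun j => LinearMap.trace_comp_comm' (T ∘ₗ hitR (q j)) (hitR (p j)),
    LinearMap.comp_assoc]
  have h4 : ∑ j, T ∘ₗ hitR (q j) ∘ₗ hitR (p j) = T ∘ₗ ∑ j, hitR (q j) ∘ₗ hitR (p j) := by
    ext; simp
  rw [← map_sum, h4, h2, LinearMap.comp_smul, LinearMap.comp_id, map_smul, smul_eq_mul]

theorem sqTraceR_hitL [FiniteDimensional F A] (f : A →ₗ[F] F) (h : A) :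
    sqTraceR F A (hitL f h) = f 1 * sqTraceR F A h := by
  let b := Module.finBasis F A
  let T := LinearMap.mulRight F h ∘ₗ antipodeSq F
  let p j := (f ∘ₗ LinearMap.mulRight F (b j)) ∘ₗ antipode F
  let q j := b.coord j
  have h1 : LinearMap.mulRight F (hitL f h) ∘ₗ antipodeSq F =
      ∑ j, hitL (q j) ∘ₗ T ∘ₗ hitL (p j) := by
    ext x
    have h3 (i : A × A) : ∑ j, convol
        ((q j ∘ₗ LinearMap.mulRight F ((ℛ F h).right i)) ∘ₗ antipodeSq F) (p j) =
        f ((ℛ F h).right i) • counit := by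
      ext y
      have := congrArg (fun z => f (z * (ℛ F h).right i)) (sum_antipode_mul_antipodeSq (ℛ F y))
      simp only [Algebra.algebraMap_eq_smul_one, Finset.sum_mul, map_sum] at this
      simp only [LinearMap.sum_apply, convol_repr (ℛ F y)]
      rw [Finset.sum_comm]
      simp only [p, q, LinearMap.comp_apply, LinearMap.mulRight_apply]
      simp_rw [mul_comm (b.coord _ _), sum_basis_mul, ← mul_assoc, this]
      simp [mul_comm]
    simp only [LinearMap.sum_apply, LinearMap.comp_apply, LinearMap.mulRight_apply, T]
    simp_rw [hitL_mul (ℛ F h), hitL_antipodeSq, hitL_hitL]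
    rw [Finset.sum_comm]
    simp_rw [← Finset.sum_mul, ← map_sum, ← hitL_sum, h3, hitL_smul, hitL_counit]
    simp [hitL_repr (ℛ F h), Finset.mul_sum]
  have h2 : ∑ j, hitL (p j) ∘ₗ hitL (q j) = f 1 • LinearMap.id := by
    ext x
    simp only [LinearMap.sum_apply, LinearMap.comp_apply, hitL_hitL, ← hitL_sum]
    have : ∑ j, convol (p j) (q j) = f 1 • counit := by
      ext y
      have := congrArg f (sum_antipode_mul_eq_algebraMap_counit (ℛ F y))
      simp only [Algebra.algebraMap_eq_smul_one, map_sum] at this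
      simp only [LinearMap.sum_apply, convol_repr (ℛ F y)]
      rw [Finset.sum_comm]
      simp only [p, q, LinearMap.comp_apply, LinearMap.mulRight_apply]
      simp_rw [sum_basis_mul, this]
      simp [mul_comm]
    rw [this, hitL_smul, hitL_counit]; simp
  rw [sqTraceR_apply, h1, map_sum, sqTraceR_apply]
  simp_rw [fun j => LinearMap.trace_comp_comm' (T ∘ₗ hitL (p j)) (hitL (q j)),
    LinearMap.comp_assoc]
  have h4 : ∑ j, T ∘ₗ hitL (p j) ∘ₗ hitL (q j) = T ∘ₗ ∑ j, hitL (p j) ∘ₗ hitL (q j) := by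
    ext; simp
  rw [← map_sum, h4, h2, LinearMap.comp_smul, LinearMap.comp_id, map_smul, smul_eq_mul]

/-- `φ` is a left integral on `A`: `h₁ φ(h₂) = φ(h) 1`. -/
def IsLeftInt (φ : A →ₗ[F] F) : Prop := ∀ h, hitL φ h = φ h • (1 : A)

/-- `ψ` is a right integral on `A`: `ψ(h₁) h₂ = ψ(h) 1`. -/
def IsRightInt (ψ : A →ₗ[F] F) : Prop := ∀ h, hitR ψ h = ψ h • (1 : A)

theorem isLeftInt_sqTraceL [FiniteDimensional F A] : IsLeftInt (sqTraceL F A) := fun h =>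
  eq_of_forall_dual (F := F) fun f => by
    rw [← apply_hitR, sqTraceL_hitR]; simp [mul_comm]

theorem isRightInt_sqTraceR [FiniteDimensional F A] : IsRightInt (sqTraceR F A) := fun h =>
  eq_of_forall_dual (F := F) fun f => by
    rw [apply_hitR, sqTraceR_hitL]; simp [mul_comm]

open WithConv in
theorem IsLeftInt.apply_mul_hitR {φ : A →ₗ[F] F} (hφ : IsLeftInt φ) (f : A →ₗ[F] F) (a h : A) :
    φ (a * hitR f h) = φ (hitR (f ∘ₗ antipode F) a * h) := by
  let r := ℛ F h
  let P : A →ₗ[F] A := ∑ i ∈ r.index, (φ ∘ₗ LinearMap.mulRight F (r.right i)).smulRight (r.left i)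
  let G : A →ₗ[F] A := (φ ∘ₗ LinearMap.mulRight F h).smulRight 1
  have h1 : toConv LinearMap.id * toConv P = toConv G := by
    ext x
    rw [(ℛ F x).convMul_apply]
    have := hφ (x * h)
    rw [hitL_repr ((ℛ F x).mul r)] at this
    simpa [P, G, Finset.sum_product, Finset.mul_sum, LinearMap.sum_apply] using this
  have h2 : toConv P = toConv (antipode F) * toConv G := by
    rw [← h1, ← mul_assoc, LinearMap.antipode_mul_id, one_mul]
  have h3 : P a = _ := congrArg (fun p => p a) h2
  rw [(ℛ F a).convMul_apply] at h3
  have h4 := congrArg f h3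
  simp only [P, G, LinearMap.sum_apply, LinearMap.smulRight_apply, map_sum, LinearMap.comp_apply,
    LinearMap.mulRight_apply, map_smul, mul_smul_comm, mul_one, smul_eq_mul] at h4
  rw [hitR_repr r, hitR_repr (ℛ F a)]
  simpa [Finset.mul_sum, Finset.sum_mul, mul_comm] using h4

open WithConv in
theorem IsRightInt.apply_hitL_mul {ψ : A →ₗ[F] F} (hψ : IsRightInt ψ) (f : A →ₗ[F] F) (a h : A) :
    ψ (hitL f h * a) = ψ (h * hitL (f ∘ₗ antipode F) a) := by
  let r := ℛ F h
  let P : A →ₗ[F] A := ∑ i ∈ r.index, (ψ ∘ₗ LinearMap.mulLeft F (r.left i)).smulRight (r.right i)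
  let G : A →ₗ[F] A := (ψ ∘ₗ LinearMap.mulLeft F h).smulRight 1
  have h1 : toConv P * toConv LinearMap.id = toConv G := by
    ext x
    rw [(ℛ F x).convMul_apply]
    have := hψ (h * x)
    rw [hitR_repr (r.mul (ℛ F x))] at this
    simpa [P, G, Finset.sum_product_right, Finset.sum_mul, LinearMap.sum_apply] using this
  have h2 : toConv P = toConv G * toConv (antipode F) := by
    rw [← h1, mul_assoc, LinearMap.id_mul_antipode, mul_one]
  have h3 : P a = _ := congrArg (fun p => p a) h2
  rw [(ℛ F a).convMul_apply] at h3
  have h4 := congrArg f h3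
  simp only [P, G, LinearMap.sum_apply, LinearMap.smulRight_apply, map_sum, LinearMap.comp_apply,
    LinearMap.mulLeft_apply, map_smul, smul_mul_assoc, one_mul, smul_eq_mul] at h4
  rw [hitL_repr r, hitL_repr (ℛ F a)]
  simpa [Finset.mul_sum, Finset.sum_mul, mul_comm] using h4

open WithConv in
theorem IsRightInt.apply_antipode_mul_hitL {ψ : A →ₗ[F] F} (hψ : IsRightInt ψ)
    (f : A →ₗ[F] F) (a h : A) :
    ψ (antipode F a * hitL f h) = ψ (antipode F (hitR f a) * h) := by
  let r := ℛ F h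
  let P : A →ₗ[F] A := ∑ i ∈ r.index,
    (ψ ∘ₗ LinearMap.mulRight F (r.left i) ∘ₗ antipode F).smulRight (r.right i)
  let G : A →ₗ[F] A := (ψ ∘ₗ LinearMap.mulRight F h ∘ₗ antipode F).smulRight 1
  have h1 : toConv (antipode F) * toConv P = toConv G := by
    ext x
    rw [(ℛ F x).convMul_apply]
    have := hψ (antipode F x * h)
    let s : Repr F (antipode F x) (A × A) :=
      { index := (ℛ F x).index
        left := fun i => antipode F ((ℛ F x).right i)
        right := fun i => antipode F ((ℛ F x).left i)
        eq := by rw [comul_antipode, ← (ℛ F x).eq]; simp }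
    rw [hitR_repr (s.mul r)] at this
    simpa [P, G, s, Finset.sum_product, Finset.mul_sum, LinearMap.sum_apply] using this
  have h2 : toConv P = toConv LinearMap.id * toConv G := by
    rw [← h1, ← mul_assoc, LinearMap.id_mul_antipode, one_mul]
  have h3 : P a = _ := congrArg (fun p => p a) h2
  rw [(ℛ F a).convMul_apply] at h3
  have h4 := congrArg f h3
  simp only [P, G, LinearMap.sum_apply, LinearMap.smulRight_apply, map_sum, LinearMap.comp_apply,
    LinearMap.mulRight_apply, map_smul, mul_smul_comm, mul_one, smul_eq_mul] at h4
  rw [hitL_repr r, hitR_repr (ℛ F a)]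
  simpa [Finset.mul_sum, Finset.sum_mul, mul_comm] using h4

end Integrals

section HaarIntegral

open Coalgebra HopfAlgebra

/-- A semisimple ring has a left annihilator of the kernel of any ring homomorphism `f`
mapping to `1` under `f`. -/
theorem exists_map_eq_one_and_mul_eq_zero {R S : Type*} [Ring R] [IsSemisimpleRing R] [Ring S]
    (f : R →+* S) : ∃ e, f e = 1 ∧ ∀ x, f x = 0 → x * e = 0 := by
  obtain ⟨J, hJ⟩ := exists_isCompl (RingHom.ker f : Submodule R R)
  obtain ⟨a, ha, e, he, hae⟩ := Submodule.mem_sup.1 (hJ.sup_eq_top ▸ Submodule.mem_top (x := 1))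
  refine ⟨e, ?_, fun x hx => ?_⟩
  · have := congrArg f hae
    rwa [map_add, (RingHom.mem_ker (f := f)).1 ha, zero_add, map_one] at this
  · refine (Submodule.disjoint_def.1 hJ.disjoint) _ ?_ (J.smul_mem x he)
    exact (RingHom.mem_ker (f := f)).2 (by rw [map_mul, hx, zero_mul])

variable {F A : Type*} [Field F] [Ring A] [HopfAlgebra F A]

variable (F) in
/-- A two-sided integral of `A` normalized by the counit. -/
structure IsNormalizedIntegral (Λ : A) : Prop where
  counit_eq : counit (R := F) Λ = 1
  mul_left : ∀ x, x * Λ = counit (R := F) x • Λ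
  mul_right : ∀ x, Λ * x = counit (R := F) x • Λ

variable (F A) in
theorem exists_isNormalizedIntegral [IsSemisimpleRing A] : ∃ Λ : A, IsNormalizedIntegral F Λ := by
  let f : A →+* F := (Bialgebra.counitAlgHom F A : A →ₐ[F] F)
  have hf (x : A) : f x = counit (R := F) x := rfl
  have h0 (x : A) : f (x - algebraMap F A (f x)) = 0 := by simp [hf]
  obtain ⟨e, he, he'⟩ := exists_map_eq_one_and_mul_eq_zero f
  obtain ⟨e₁, he₁, he₁'⟩ := exists_map_eq_one_and_mul_eq_zero f.op
  have hl (x : A) : x * e = f x • e := by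
    have := he' _ (h0 x)
    rwa [sub_mul, sub_eq_zero, ← Algebra.smul_def] at this
  have hr (x : A) : e₁.unop * x = f x • e₁.unop := by
    have := congrArg MulOpposite.unop (he₁' (.op (x - algebraMap F A (f x)))
      (congrArg MulOpposite.op (h0 x)))
    rw [MulOpposite.unop_mul, MulOpposite.unop_op, MulOpposite.unop_zero, mul_sub, sub_eq_zero,
      ← Algebra.commutes, ← Algebra.smul_def] at this
    exact this
  have h1 : f e₁.unop = 1 := congrArg MulOpposite.unop he₁
  have h2 : e = e₁.unop := by
    have := hl e₁.unop
    rw [hr, h1, he, one_smul, one_smul] at this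
    exact this.symm
  exact ⟨e, he, hl, fun x => by rw [h2]; exact hr x⟩

variable [FiniteDimensional F A] {Λ : A} (hΛ : IsNormalizedIntegral F Λ)

include hΛ

theorem sqTraceL_integral : sqTraceL F A Λ = 1 := by
  rw [sqTraceL_apply]
  have : LinearMap.mulLeft F Λ ∘ₗ antipodeSq F = (counit (R := F) (A := A)).smulRight Λ := by
    ext x; simp [hΛ.mul_right, counit_antipodeSq]
  rw [this, LinearMap.trace_smulRight, hΛ.counit_eq]

theorem sqTraceR_integral : sqTraceR F A Λ = 1 := by
  rw [sqTraceR_apply]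
  have : LinearMap.mulRight F Λ ∘ₗ antipodeSq F = (counit (R := F) (A := A)).smulRight Λ := by
    ext x; simp [hΛ.mul_left, counit_antipodeSq]
  rw [this, LinearMap.trace_smulRight, hΛ.counit_eq]

omit [FiniteDimensional F A] in
theorem IsLeftInt.apply_mul_hitR_integral {φ : A →ₗ[F] F} (hφ : IsLeftInt φ) (f : A →ₗ[F] F)
    (a : A) : φ (a * hitR f Λ) = f (antipode F a) * φ Λ := by
  rw [hφ.apply_mul_hitR, hΛ.mul_left, counit_hitR]; simp

theorem sqTraceR_hitL_integral_mul (f : A →ₗ[F] F) (a : A) :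
    sqTraceR F A (hitL f Λ * a) = f (antipode F a) := by
  rw [isRightInt_sqTraceR.apply_hitL_mul, hΛ.mul_right, counit_hitL]
  simp [sqTraceR_integral hΛ]

theorem sqTraceR_antipode_mul_hitL_integral (f : A →ₗ[F] F) (a : A) :
    sqTraceR F A (antipode F a * hitL f Λ) = f a := by
  rw [isRightInt_sqTraceR.apply_antipode_mul_hitL, hΛ.mul_left]
  simp [sqTraceR_integral hΛ, counit_hitR]

theorem antipode_injective_of_integral : Function.Injective (antipode F (A := A)) := by
  refine (injective_iff_map_eq_zero _).2 fun a ha => eq_of_forall_dual (F := F) fun f => ?_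
  rw [← sqTraceR_antipode_mul_hitL_integral hΛ, ha]; simp

theorem eq_zero_of_sqTraceL_mul (a : A) (h : ∀ b, sqTraceL F A (a * b) = 0) : a = 0 := by
  refine antipode_injective_of_integral hΛ ?_
  rw [map_zero]
  refine eq_of_forall_dual (F := F) fun f => ?_
  have := isLeftInt_sqTraceL.apply_mul_hitR_integral hΛ f a
  rw [h, sqTraceL_integral hΛ, mul_one] at this
  simp [← this]

theorem IsLeftInt.apply_eq {φ : A →ₗ[F] F} (hφ : IsLeftInt φ) (a : A) :
    φ a = sqTraceL F A a * φ Λ := by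
  have key {φ : A →ₗ[F] F} (hφ : IsLeftInt φ) : φ a = sqTraceR F A (antipode F a) * φ Λ := by
    have := hφ.apply_mul_hitR_integral hΛ (sqTraceR F A) a
    rwa [isRightInt_sqTraceR, sqTraceR_integral hΛ, one_smul, mul_one] at this
  rw [key isLeftInt_sqTraceL, sqTraceL_integral hΛ, mul_one, key hφ]

theorem sqTraceR_eq_sqTraceL_mul (a : A) :
    sqTraceR F A a = sqTraceL F A (a * hitR (sqTraceL F A) Λ) := by
  have := sqTraceR_hitL_integral_mul hΛ (sqTraceL F A) a
  rw [isLeftInt_sqTraceL, sqTraceL_integral hΛ, one_smul, one_mul] at this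
  rw [this, isLeftInt_sqTraceL.apply_mul_hitR_integral hΛ, sqTraceL_integral hΛ, mul_one]

theorem hitR_sqTraceL (h : A) :
    hitR (sqTraceL F A) h = sqTraceL F A h • hitR (sqTraceL F A) Λ := by
  refine eq_of_forall_dual (F := F) fun f => ?_
  have hf : IsLeftInt (sqTraceL F A ∘ₗ hitL f) := fun x => by
    have : sqTraceL F A ∘ₗ hitL f = convol (sqTraceL F A) f := by
      ext y; rw [convol_apply]; rfl
    rw [this, ← hitL_hitL, isLeftInt_sqTraceL, convol_apply]
  have := hf.apply_eq hΛ h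
  simp only [LinearMap.comp_apply] at this
  rw [apply_hitR, this, map_smul, apply_hitR, smul_eq_mul]

theorem isGroupLikeElem_hitR_sqTraceL : IsGroupLikeElem F (hitR (sqTraceL F A) Λ) where
  counit_eq_one := by rw [counit_hitR, sqTraceL_integral hΛ]
  comul_eq_tmul_self := by
    set g := hitR (sqTraceL F A) Λ with hg
    have h1 (f : A →ₗ[F] F) : hitR f g = f g • g := by
      have : convol (sqTraceL F A) f = f g • sqTraceL F A := by
        ext x; rw [convol_apply', hitR_sqTraceL hΛ]; simp [← hg, mul_comm]
      rw [hg, hitR_hitR, this, hitR_smul]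
    let b := Module.finBasis F A
    rw [comul_eq_sum_hitR b]
    simp_rw [h1, ← TensorProduct.smul_tmul, ← TensorProduct.sum_tmul]
    congr 1
    exact b.sum_repr g

omit hΛ in
theorem _root_.IsGroupLikeElem.exists_pow_eq_one {g : A} (hg : IsGroupLikeElem F g) :
    ∃ n, 0 < n ∧ g ^ n = 1 := by
  have : Finite (GroupLike F A) := (linearIndep_groupLikeVal (R := F) (A := A)).finite
  obtain ⟨n, hn, h⟩ := isOfFinOrder_iff_pow_eq_one.1 (isOfFinOrder_of_finite (⟨g, hg⟩ : GroupLike F A))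
  exact ⟨n, hn, congrArg GroupLike.val h⟩

end HaarIntegral

section TraceNeZero

variable {F : Type*} [Field F] [CharZero F] [IsAlgClosed F]

/-- The trace of a power of an endomorphism of finite order, in terms of its eigenvalues. -/
theorem exists_trace_pow_eq_sum {V : Type*} [AddCommGroup V] [Module F V] [FiniteDimensional F V]
    {f : Module.End F V} {m : ℕ} (hm : 0 < m) (hf : f ^ m = 1) :
    ∃ (s : Finset F) (n : F → ℕ), (∀ μ ∈ s, μ ^ m = 1) ∧
      ∀ j, LinearMap.trace F V (f ^ j) = ∑ μ ∈ s, n μ * μ ^ j := by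
  classical
  have hss : f.IsFinitelySemisimple := by
    refine Module.End.IsSemisimple.isFinitelySemisimple
      (Module.End.isSemisimple_of_squarefree_aeval_eq_zero (p := Polynomial.X ^ m - Polynomial.C 1)
        (Polynomial.separable_X_pow_sub_C 1 (by exact_mod_cast hm.ne') one_ne_zero).squarefree ?_)
    simp [hf]
  have hind := f.eigenspaces_iSupIndep
  have hint : DirectSum.IsInternal f.eigenspace := by
    refine DirectSum.isInternal_submodule_of_iSupIndep_of_iSup_eq_top hind ?_
    rw [← f.iSup_maxGenEigenspace_eq_top]
    exact iSup_congr fun μ => (hss.maxGenEigenspace_eq_eigenspace μ).symm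
  have hfin := WellFoundedGT.finite_ne_bot_of_iSupIndep hind
  have hpow (j : ℕ) (μ : F) (x : V) (hx : x ∈ f.eigenspace μ) : (f ^ j) x = μ ^ j • x := by
    induction j with
    | zero => simp
    | succ j ih =>
      rw [pow_succ', Module.End.mul_apply, ih, map_smul, Module.End.mem_eigenspace_iff.1 hx,
        smul_smul, pow_succ]
  refine ⟨hfin.toFinset, fun μ => Module.finrank F (f.eigenspace μ), fun μ hμ => ?_, fun j => ?_⟩
  · obtain ⟨x, hx, hx0⟩ := Submodule.exists_mem_ne_zero_of_ne_bot (hfin.mem_toFinset.1 hμ)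
    have := hpow m μ x hx
    rw [hf, Module.End.one_apply] at this
    exact smul_left_injective F hx0 (by simpa using this.symm)
  · have hmaps (μ : F) : Set.MapsTo (f ^ j) (f.eigenspace μ) (f.eigenspace μ) := fun x hx => by
      rw [SetLike.mem_coe] at hx
      rw [hpow j μ x hx]
      exact Submodule.smul_mem _ _ hx
    rw [LinearMap.trace_eq_sum_trace_restrict' hint hfin hmaps]
    refine Finset.sum_congr rfl fun μ _ => ?_
    have : (f ^ j).restrict (hmaps μ) = μ ^ j • LinearMap.id := by
      ext x; exact hpow j μ x x.2
    rw [this, map_smul, LinearMap.trace_id, smul_eq_mul, mul_comm]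

/-- If an endomorphism of finite order and its inverse have the same trace, then this trace is an
algebraic number which is real under every complex embedding. -/
theorem exists_conj_eq_of_trace_eq {V : Type*} [AddCommGroup V] [Module F V]
    [FiniteDimensional F V] (τ : algebraicClosure ℚ F →ₐ[ℚ] ℂ)
    {f : Module.End F V} {m : ℕ} (hf : f ^ (m + 1) = 1)
    (htr : LinearMap.trace F V (f ^ m) = LinearMap.trace F V f) :
    ∃ z : algebraicClosure ℚ F, (z : F) = LinearMap.trace F V f ∧ starRingEnd ℂ (τ z) = τ z := by
  classical
  obtain ⟨s, n, hs, hn⟩ := exists_trace_pow_eq_sum m.succ_pos hf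
  have hmem (μ : F) (hμ : μ ∈ s) : μ ∈ algebraicClosure ℚ F := by
    refine mem_algebraicClosure_iff.2 (IsIntegral.isAlgebraic ?_)
    exact IsIntegral.of_pow m.succ_pos (by rw [hs μ hμ]; exact isIntegral_one)
  let e (μ : F) : algebraicClosure ℚ F := if h : μ ∈ algebraicClosure ℚ F then ⟨μ, h⟩ else 0
  have he (μ : F) (hμ : μ ∈ s) : (e μ : F) = μ := by simp [e, hmem μ hμ]
  let z (j : ℕ) : algebraicClosure ℚ F := ∑ μ ∈ s, n μ * e μ ^ j
  have hz (j : ℕ) : (z j : F) = LinearMap.trace F V (f ^ j) := by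
    rw [hn]
    simp only [z, AddSubmonoidClass.coe_finsetSum]
    refine Finset.sum_congr rfl fun μ hμ => ?_
    simp [he μ hμ]
  refine ⟨z 1, by rw [hz, pow_one], ?_⟩
  have h1 : z m = z 1 := Subtype.ext (by rw [hz, hz, htr, pow_one])
  conv_rhs => rw [← h1]
  simp only [z, map_sum, map_mul, map_natCast, pow_one, map_pow]
  refine Finset.sum_congr rfl fun μ hμ => ?_
  have h2 : τ (e μ) ^ (m + 1) = 1 := by
    rw [← map_pow]
    have : e μ ^ (m + 1) = 1 := Subtype.ext (by simpa [he μ hμ] using hs μ hμ)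
    rw [this, map_one]
  rw [← Complex.inv_eq_conj (Complex.norm_eq_one_of_pow_eq_one h2 m.succ_ne_zero),
    inv_eq_of_mul_eq_one_right (b := τ (e μ) ^ m) (by rwa [← pow_succ'])]

theorem exists_pos_of_trace {ι : Type*} [Fintype ι] [DecidableEq ι]
    (τ : algebraicClosure ℚ F →ₐ[ℚ] ℂ)
    {U V G : Matrix ι ι F} {c : F} {N : ℕ} (hN : 0 < N) (hG : G ^ N = 1) (hUV : U * V = 1)
    (hU : U.trace = c) (hV : V.trace = 1) (hGU : c • V = G * U) (hc : c ≠ 0) :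
    ∃ z : algebraicClosure ℚ F, (z : F) = c ∧ ∃ t : ℝ, 0 < t ∧ τ z = t := by
  obtain ⟨r, hr⟩ := IsAlgClosed.exists_pow_nat_eq c two_pos
  have hr0 : r ≠ 0 := by rintro rfl; simp at hr; exact hc hr.symm
  have hVU : V * U = 1 := mul_eq_one_comm.1 hUV
  let W := r⁻¹ • U
  have hGW : G * W ^ 2 = 1 := by
    have : G * W ^ 2 = (r⁻¹ * r⁻¹) • (G * U * U) := by simp [W, pow_two, smul_smul, mul_assoc]
    rw [this, ← hGU, smul_mul_assoc, hVU, smul_smul, ← hr]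
    field_simp
    simp
  have hWG : W ^ 2 * G = 1 := mul_eq_one_comm.1 hGW
  obtain ⟨m, hm⟩ : ∃ m, 2 * N = m + 1 := ⟨2 * N - 1, by omega⟩
  have hW : W ^ (m + 1) = 1 := by
    have hcomm : Commute G (W ^ 2) := hGW.trans hWG.symm
    have := hcomm.mul_pow N
    rw [hGW, one_pow, hG, one_mul, ← pow_mul, hm] at this
    exact this.symm
  have hWm : W ^ m = r • V := by
    have h1 : W * (r • V) = 1 := by simp [W, hUV, smul_smul, hr0]
    calc W ^ m = W ^ m * (W * (r • V)) := by rw [h1, mul_one]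
      _ = r • V := by rw [← mul_assoc, ← pow_succ, hW, one_mul]
  have htrW : W.trace = r := by
    simp only [W, Matrix.trace_smul, hU, ← hr, smul_eq_mul]
    field_simp
  have htr (M : Matrix ι ι F) : LinearMap.trace F (ι → F) (Matrix.toLinAlgEquiv' M) = M.trace :=
    Matrix.trace_toLin'_eq M
  obtain ⟨z, hz, hconj⟩ := exists_conj_eq_of_trace_eq τ
    (f := Matrix.toLinAlgEquiv' W) (m := m) (by rw [← map_pow, hW, map_one])
    (by rw [← map_pow, htr, htr, hWm, htrW, Matrix.trace_smul, hV, smul_eq_mul, mul_one])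
  rw [htr, htrW] at hz
  have hz0 : τ z ≠ 0 := by
    rw [Ne, map_eq_zero_iff τ τ.injective]
    rintro rfl
    exact hr0 (by simpa using hz.symm)
  obtain ⟨t, ht⟩ := Complex.conj_eq_iff_real.1 hconj
  refine ⟨z ^ 2, by simp [hz, hr], t ^ 2, ?_, by simp [ht]⟩
  have : t ≠ 0 := by rintro rfl; exact hz0 (by simp [ht])
  positivity

end TraceNeZero

section PiMatrix

variable {F : Type*} [Field F] {n : ℕ} {d : Fin n → ℕ}

variable (F d) in
/-- The algebra of block diagonal matrices with blocks of sizes `d i`. -/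
abbrev PiMatrix : Type _ := (i : Fin n) → Matrix (Fin (d i)) (Fin (d i)) F

theorem trace_mulLeft_mulRight_pi_matrix (a b : PiMatrix F d) :
    LinearMap.trace F (PiMatrix F d) (LinearMap.mulLeft F a ∘ₗ LinearMap.mulRight F b) =
      ∑ i, (a i).trace * (b i).trace := by
  classical
  rw [LinearMap.trace_eq_matrix_trace F (Pi.basis fun i => Matrix.stdBasis F (Fin (d i)) (Fin (d i)))]
  simp only [Matrix.trace, Matrix.diag, LinearMap.toMatrix_apply, Fintype.sum_sigma,
    Fintype.sum_prod_type]
  refine Finset.sum_congr rfl fun i _ => ?_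
  rw [Finset.sum_mul_sum]
  refine Finset.sum_congr rfl fun j _ => Finset.sum_congr rfl fun l _ => ?_
  have h1 : (Pi.basis fun i => Matrix.stdBasis F (Fin (d i)) (Fin (d i))) ⟨i, j, l⟩ i =
      Matrix.single j l 1 := by
    simp [Pi.basis_apply, Matrix.stdBasis_eq_single]
  rw [Pi.basis_repr, LinearMap.comp_apply, LinearMap.mulLeft_apply, LinearMap.mulRight_apply,
    Pi.mul_apply, Pi.mul_apply, h1]
  simp [Matrix.stdBasis, Matrix.mul_apply, Matrix.single_apply, ite_and]

/-- The sum of the traces of the blocks. -/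
def piTrace : PiMatrix F d →ₗ[F] F := ∑ i, Matrix.traceLinearMap _ F F ∘ₗ LinearMap.proj i

theorem piTrace_apply (a : PiMatrix F d) : piTrace a = ∑ i, (a i).trace := by simp [piTrace]

theorem piTrace_mul_comm (a b : PiMatrix F d) : piTrace (a * b) = piTrace (b * a) := by
  simp only [piTrace_apply, Pi.mul_apply]
  exact Finset.sum_congr rfl fun i _ => Matrix.trace_mul_comm _ _

theorem piTrace_single (i : Fin n) (x : Matrix (Fin (d i)) (Fin (d i)) F) (a : PiMatrix F d) :
    piTrace (Pi.single i x * a) = (x * a i).trace := by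
  classical
  rw [piTrace_apply, Finset.sum_eq_single i] <;> simp +contextual

theorem eq_of_piTrace_mul {a b : PiMatrix F d} (h : ∀ x, piTrace (x * a) = piTrace (x * b)) : a = b := by
  classical
  ext i j l
  have := h (Pi.single i (Matrix.single l j 1))
  simpa [piTrace_single, Matrix.trace_single_mul] using this

theorem exists_eq_piTrace_mul (φ : PiMatrix F d →ₗ[F] F) : ∃ u, ∀ a, φ a = piTrace (a * u) := by
  let T : PiMatrix F d →ₗ[F] (PiMatrix F d →ₗ[F] F) := (LinearMap.mul F (PiMatrix F d)).flip.compr₂ piTrace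
  have hT : Function.Injective T := fun a b h =>
    eq_of_piTrace_mul fun x => congrArg (fun f => f x) h
  have := (LinearMap.injective_iff_surjective_of_finrank_eq_finrank
    (Subspace.dual_finrank_eq (K := F) (V := PiMatrix F d)).symm).1 hT
  obtain ⟨u, hu⟩ := this φ
  exact ⟨u, fun a => by rw [← hu]; rfl⟩

theorem trace_ne_zero_of_pi_matrix [CharZero F] [IsAlgClosed F] [NeZero n] [∀ i, NeZero (d i)]
    (σ : PiMatrix F d →ₐ[F] PiMatrix F d)
    (hnd : ∀ a, (∀ b, LinearMap.trace F _ (LinearMap.mulLeft F (a * b) ∘ₗ σ.toLinearMap) = 0) →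
      a = 0)
    {g : PiMatrix F d} {N : ℕ} (hN : 0 < N) (hgN : g ^ N = 1)
    (hg : ∀ a, LinearMap.trace F _ (LinearMap.mulRight F a ∘ₗ σ.toLinearMap) =
      LinearMap.trace F _ (LinearMap.mulLeft F (a * g) ∘ₗ σ.toLinearMap)) :
    LinearMap.trace F _ σ.toLinearMap ≠ 0 := by
  classical
  obtain ⟨u, hu⟩ := exists_eq_piTrace_mul (LinearMap.trace F (PiMatrix F d) ∘ₗ
    LinearMap.lcomp F (PiMatrix F d) σ.toLinearMap ∘ₗ LinearMap.mul F (PiMatrix F d))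
  replace hu (a : PiMatrix F d) :
      LinearMap.trace F _ (LinearMap.mulLeft F a ∘ₗ σ.toLinearMap) = piTrace (a * u) := hu a
  have hcomm (a : PiMatrix F d) : u * a = σ a * u := by
    refine eq_of_piTrace_mul fun b => ?_
    have h1 : LinearMap.trace F _ (LinearMap.mulLeft F (a * b) ∘ₗ σ.toLinearMap) =
        LinearMap.trace F _ (LinearMap.mulLeft F (b * σ a) ∘ₗ σ.toLinearMap) := by
      rw [LinearMap.mulLeft_mul, LinearMap.comp_assoc, LinearMap.trace_comp_comm']
      congr 1
      refine LinearMap.ext fun x => ?_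
      simp
    rw [hu, hu] at h1
    rw [← mul_assoc, ← mul_assoc, ← h1, piTrace_mul_comm, mul_assoc]
  have hinj : Function.Injective (LinearMap.mulLeft F u) := by
    refine (injective_iff_map_eq_zero _).2 fun y hy => hnd y fun b => ?_
    rw [LinearMap.mulLeft_apply] at hy
    rw [hu, piTrace_mul_comm, ← mul_assoc, hy, zero_mul, map_zero]
  obtain ⟨v, huv⟩ := LinearMap.injective_iff_surjective.1 hinj 1
  rw [LinearMap.mulLeft_apply] at huv
  have hvu : v * u = 1 := hinj (by simp [← mul_assoc, huv])
  have hσ : σ.toLinearMap = LinearMap.mulLeft F u ∘ₗ LinearMap.mulRight F v := by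
    refine LinearMap.ext fun x => ?_
    simp only [AlgHom.toLinearMap_apply, LinearMap.comp_apply, LinearMap.mulLeft_apply,
      LinearMap.mulRight_apply]
    rw [← mul_assoc, hcomm, mul_assoc, huv, mul_one]
  have hv (i : Fin n) : (v i).trace = 1 := by
    have h1 := hu (Pi.single i (Matrix.single 0 0 1) * v)
    rw [mul_assoc, hvu, mul_one, hσ, ← LinearMap.comp_assoc, ← LinearMap.mulLeft_mul, mul_assoc,
      hvu, mul_one, trace_mulLeft_mulRight_pi_matrix, piTrace_apply, Finset.sum_eq_single i,
      Finset.sum_eq_single i] at h1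
    · simpa using h1
    all_goals simp +contextual
  have hgu (i : Fin n) : (u i).trace • v i = g i * u i := by
    have : (fun i => (u i).trace • v i) = g * u := by
      refine eq_of_piTrace_mul fun a => ?_
      have h1 := hg a
      have h2 : LinearMap.mulRight F a ∘ₗ σ.toLinearMap =
          LinearMap.mulLeft F u ∘ₗ LinearMap.mulRight F (v * a) := by
        rw [hσ]
        refine LinearMap.ext fun x => ?_
        simp [mul_assoc]
      rw [hu, h2, trace_mulLeft_mulRight_pi_matrix] at h1
      rw [← mul_assoc, ← h1, piTrace_apply]
      refine Finset.sum_congr rfl fun i _ => ?_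
      simp [Matrix.trace_mul_comm (a i)]
    exact congrFun this i
  have huvi (i : Fin n) : u i * v i = 1 := congrFun huv i
  have hgi (i : Fin n) : g i ^ N = 1 := congrFun hgN i
  have hc (i : Fin n) : (u i).trace ≠ 0 := fun h => by
    have h1 := hgu i
    rw [h, zero_smul] at h1
    have h2 : g i = 0 := by
      rw [← mul_one (g i), ← huvi i, ← mul_assoc, ← h1, zero_mul]
    have h3 := hgi i
    rw [h2, zero_pow hN.ne'] at h3
    exact zero_ne_one h3
  have : Algebra.IsAlgebraic ℚ (algebraicClosure ℚ F) := by
    convert algebraicClosure.isAlgebraic ℚ F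
    · rfl
    · exact Subsingleton.elim _ _
  let τ : algebraicClosure ℚ F →ₐ[ℚ] ℂ := IsAlgClosed.lift
  choose z hz t ht hzt using fun i =>
    exists_pos_of_trace τ hN (hgi i) (huvi i) rfl (hv i) (hgu i) (hc i)
  rw [hσ, trace_mulLeft_mulRight_pi_matrix]
  simp_rw [hv, mul_one, ← hz]
  intro h
  have h1 : ∑ i, z i = 0 := Subtype.ext (by simpa using h)
  have h2 : ∑ i, t i = 0 := by
    have := congrArg τ h1
    simp only [map_sum, hzt, map_zero] at this
    exact_mod_cast this
  exact (Finset.sum_pos (fun i _ => ht i) Finset.univ_nonempty).ne' h2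

end PiMatrix

theorem trace_ne_zero_of_semisimple {F A : Type*} [Field F] [CharZero F] [IsAlgClosed F] [Ring A]
    [Algebra F A] [FiniteDimensional F A] [IsSemisimpleRing A] [Nontrivial A] (σ : A →ₐ[F] A)
    (hnd : ∀ a, (∀ b, LinearMap.trace F _ (LinearMap.mulLeft F (a * b) ∘ₗ σ.toLinearMap) = 0) →
      a = 0)
    {g : A} {N : ℕ} (hN : 0 < N) (hgN : g ^ N = 1)
    (hg : ∀ a, LinearMap.trace F _ (LinearMap.mulRight F a ∘ₗ σ.toLinearMap) =
      LinearMap.trace F _ (LinearMap.mulLeft F (a * g) ∘ₗ σ.toLinearMap)) :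
    LinearMap.trace F _ σ.toLinearMap ≠ 0 := by
  obtain ⟨n, d, hd, ⟨e⟩⟩ := IsSemisimpleRing.exists_algEquiv_pi_matrix_of_isAlgClosed F A
  have : NeZero n := ⟨by
    rintro rfl
    exact zero_ne_one (e.injective (Subsingleton.elim (e 0) (e 1)))⟩
  let σ' : PiMatrix F d →ₐ[F] PiMatrix F d := (e.toAlgHom.comp σ).comp e.symm.toAlgHom
  have hL (a : PiMatrix F d) : LinearMap.trace F _ (LinearMap.mulLeft F a ∘ₗ σ'.toLinearMap) =
      LinearMap.trace F _ (LinearMap.mulLeft F (e.symm a) ∘ₗ σ.toLinearMap) := by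
    rw [← LinearMap.trace_conj' _ e.toLinearEquiv]
    congr 1
    refine LinearMap.ext fun x => ?_
    simp [σ', LinearEquiv.conj_apply]
  have hR (a : PiMatrix F d) : LinearMap.trace F _ (LinearMap.mulRight F a ∘ₗ σ'.toLinearMap) =
      LinearMap.trace F _ (LinearMap.mulRight F (e.symm a) ∘ₗ σ.toLinearMap) := by
    rw [← LinearMap.trace_conj' _ e.toLinearEquiv]
    congr 1
    refine LinearMap.ext fun x => ?_
    simp [σ', LinearEquiv.conj_apply]
  have h := trace_ne_zero_of_pi_matrix σ' (fun a ha => ?_) (g := e g) hN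
    (by rw [← map_pow, hgN, map_one]) fun a => by rw [hL, hR, hg]; simp
  · have := hL 1
    simp only [LinearMap.mulLeft_one, LinearMap.id_comp, map_one] at this
    rwa [← this]
  · refine e.symm.injective ?_
    rw [map_zero]
    refine hnd _ fun b => ?_
    have := ha (e b)
    rwa [hL, map_mul, e.symm_apply_apply] at this

section Haar

open Coalgebra HopfAlgebra

variable {F A : Type*} [Field F] [CharZero F] [IsAlgClosed F] [Ring A] [HopfAlgebra F A]
  [FiniteDimensional F A] [IsSemisimpleRing A]

omit [CharZero F] [IsAlgClosed F] in
theorem antipode_injective : Function.Injective (antipode F (A := A)) := by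
  obtain ⟨Λ, hΛ⟩ := exists_isNormalizedIntegral F A
  exact antipode_injective_of_integral hΛ

variable (F A) in
theorem sqTraceL_one_ne_zero : sqTraceL F A 1 ≠ 0 := by
  have : Nontrivial A := ⟨⟨0, 1, fun h => by simpa using congrArg (counit (R := F)) h⟩⟩
  obtain ⟨Λ, hΛ⟩ := exists_isNormalizedIntegral F A
  obtain ⟨N, hN, hg⟩ := (isGroupLikeElem_hitR_sqTraceL hΛ).exists_pow_eq_one
  let σ : A →ₐ[F] A := AlgHom.ofLinearMap (antipodeSq F) antipodeSq_one antipodeSq_mul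
  have := trace_ne_zero_of_semisimple σ (fun a ha => eq_zero_of_sqTraceL_mul hΛ a ha) hN hg
    (sqTraceR_eq_sqTraceL_mul hΛ)
  rwa [sqTraceL_apply, LinearMap.mulLeft_one, LinearMap.id_comp]

variable (F A) in
/-- A semisimple Hopf algebra in characteristic zero has a normalized two-sided integral on it. -/
theorem exists_haar : ∃ χ : A →ₗ[F] F, IsLeftInt χ ∧ IsRightInt χ ∧ χ 1 = 1 := by
  have h0 := sqTraceL_one_ne_zero F A
  set c := sqTraceL F A 1 with hc
  have hc' : sqTraceR F A 1 = c := by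
    rw [hc, sqTraceL_apply, sqTraceR_apply, LinearMap.mulLeft_one, LinearMap.mulRight_one]
  have heq (h : A) : sqTraceR F A h = sqTraceL F A h := by
    have h1 := apply_hitR (sqTraceL F A) (sqTraceR F A) h
    rw [isLeftInt_sqTraceL, isRightInt_sqTraceR, map_smul, map_smul, hc', ← hc] at h1
    exact mul_right_cancel₀ h0 (by simpa using h1)
  have heq' : sqTraceR F A = sqTraceL F A := LinearMap.ext heq
  refine ⟨c⁻¹ • sqTraceL F A, fun h => ?_, fun h => ?_, by simp [← hc, h0]⟩
  · rw [hitL_smul, isLeftInt_sqTraceL, smul_smul]; rfl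
  · rw [hitR_smul, ← heq', isRightInt_sqTraceR, smul_smul]; rfl

end Haar

section Subcoalgebras

open CoalgebraStruct (comul counit)
open HopfAlgebra

variable {k : Type} [Field k] {H : Type} [Ring H] [HopfAlgebra k H]

theorem IsSubcoalgebra.exists_repr {C : Submodule k H} (hC : IsSubcoalgebra k H C) {c : H}
    (hc : c ∈ C) : ∃ r : Coalgebra.Repr k c (C × C), (∀ i, r.left i ∈ C) ∧ ∀ i, r.right i ∈ C := by
  obtain ⟨t, ht⟩ := hC c hc
  obtain ⟨s, rfl⟩ := TensorProduct.exists_finset t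
  exact ⟨⟨s, fun i => i.1, fun i => i.2, by rw [← ht]; simp⟩, fun i => i.1.2, fun i => i.2.2⟩

theorem isSubcoalgebra_iff [FiniteDimensional k H] {C : Submodule k H} :
    IsSubcoalgebra k H C ↔ ∀ c ∈ C, ∀ f : H →ₗ[k] k, hitL f c ∈ C ∧ hitR f c ∈ C := by
  refine ⟨fun hC c hc f => ?_, fun h c hc => ?_⟩
  · obtain ⟨r, hl, hr⟩ := hC.exists_repr hc
    rw [hitL_repr r, hitR_repr r]
    exact ⟨sum_mem fun i _ => C.smul_mem _ (hl i), sum_mem fun i _ => C.smul_mem _ (hr i)⟩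
  · obtain ⟨p, hp⟩ := C.subtype.exists_leftInverse_of_injective C.ker_subtype
    have hp' (x : H) (hx : x ∈ C) : (C.subtype ∘ₗ p) x = x :=
      congrArg Subtype.val (congrArg (fun f => f ⟨x, hx⟩) hp)
    let b := Module.finBasis k H
    have h1 : (C.subtype ∘ₗ p).rTensor H (comul (R := k) c) = comul c := by
      conv_lhs => rw [comul_eq_sum_hitL b c]
      conv_rhs => rw [comul_eq_sum_hitL b c]
      simp only [map_sum, LinearMap.rTensor_tmul]
      exact Finset.sum_congr rfl fun i _ => by rw [hp' _ (h c hc _).1]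
    have h2 : (C.subtype ∘ₗ p).lTensor H (comul (R := k) c) = comul c := by
      conv_lhs => rw [comul_eq_sum_hitR b c]
      conv_rhs => rw [comul_eq_sum_hitR b c]
      simp only [map_sum, LinearMap.lTensor_tmul]
      exact Finset.sum_congr rfl fun i _ => by rw [hp' _ (h c hc _).2]
    refine ⟨TensorProduct.map p p (comul c), ?_⟩
    rw [← LinearMap.comp_apply, ← TensorProduct.map_comp]
    conv_rhs => rw [← h1, ← h2]
    rw [← LinearMap.rTensor_comp_lTensor]
    rfl

/-- The orthogonal of `X` for the form `(x, h) ↦ χ(S(x) h)`. -/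
def orth (χ : H →ₗ[k] k) (X : Submodule k H) : Submodule k H :=
  LinearMap.ker (((LinearMap.mul k H).compr₂ χ ∘ₗ antipode k ∘ₗ X.subtype).flip)

theorem mem_orth {χ : H →ₗ[k] k} {X : Submodule k H} {h : H} :
    h ∈ orth χ X ↔ ∀ x ∈ X, χ (antipode k x * h) = 0 := by
  simp [orth, LinearMap.ext_iff]

variable [FiniteDimensional k H]

theorem isSubcoalgebra_top : IsSubcoalgebra k H ⊤ := isSubcoalgebra_iff.2 (by simp)

theorem IsSubcoalgebra.inf {C D : Submodule k H} (hC : IsSubcoalgebra k H C)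
    (hD : IsSubcoalgebra k H D) : IsSubcoalgebra k H (C ⊓ D) :=
  isSubcoalgebra_iff.2 fun c hc f =>
    ⟨⟨(isSubcoalgebra_iff.1 hC c hc.1 f).1, (isSubcoalgebra_iff.1 hD c hc.2 f).1⟩,
      ⟨(isSubcoalgebra_iff.1 hC c hc.1 f).2, (isSubcoalgebra_iff.1 hD c hc.2 f).2⟩⟩

theorem isSubcoalgebra_sSup {s : Set (Submodule k H)} (hs : ∀ C ∈ s, IsSubcoalgebra k H C) :
    IsSubcoalgebra k H (sSup s) := by
  refine isSubcoalgebra_iff.2 fun c hc f => ?_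
  have hle : sSup s ≤ (sSup s).comap (hitL f) ⊓ (sSup s).comap (hitR f) :=
    sSup_le fun C hC x hx =>
      ⟨le_sSup (a := C) hC (isSubcoalgebra_iff.1 (hs C hC) x hx f).1,
        le_sSup (a := C) hC (isSubcoalgebra_iff.1 (hs C hC) x hx f).2⟩
  exact hle hc

theorem IsSubcoalgebra.mul {C D : Submodule k H} (hC : IsSubcoalgebra k H C)
    (hD : IsSubcoalgebra k H D) : IsSubcoalgebra k H (C * D) := by
  refine isSubcoalgebra_iff.2 fun c hc f => ?_
  suffices C * D ≤ (C * D).comap (hitL f) ⊓ (C * D).comap (hitR f) from this hc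
  refine Submodule.mul_le.2 fun x hx y hy => ⟨?_, ?_⟩
  · obtain ⟨r, hl, -⟩ := hD.exists_repr hy
    rw [SetLike.mem_coe, Submodule.mem_comap, hitL_mul r]
    exact sum_mem fun i _ => Submodule.mul_mem_mul (isSubcoalgebra_iff.1 hC x hx _).1 (hl i)
  · obtain ⟨r, -, hr⟩ := hC.exists_repr hx
    rw [SetLike.mem_coe, Submodule.mem_comap, hitR_mul r]
    exact sum_mem fun i _ => Submodule.mul_mem_mul (hr i) (isSubcoalgebra_iff.1 hD y hy _).2

theorem IsSubcoalgebra.exists_simple_le {X : Submodule k H} (hX : IsSubcoalgebra k H X)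
    (h0 : X ≠ ⊥) : ∃ D ≤ X, IsSimpleSubcoalgebra k H D := by
  obtain ⟨D, ⟨hDX, hD, hD0⟩, hmin⟩ := wellFounded_lt.has_min
    {D : Submodule k H | D ≤ X ∧ IsSubcoalgebra k H D ∧ D ≠ ⊥} ⟨X, le_rfl, hX, h0⟩
  exact ⟨D, hDX, hD, hD0, fun E hE hE' hE0 =>
    hE.eq_of_not_lt (hmin E ⟨hE.trans hDX, hE', hE0⟩)⟩

variable {χ : H →ₗ[k] k} (hl : IsLeftInt χ) (hr : IsRightInt χ) (h1 : χ 1 = 1)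

include hl hr in
theorem IsSubcoalgebra.orth {X : Submodule k H} (hX : IsSubcoalgebra k H X) :
    IsSubcoalgebra k H (orth χ X) := by
  refine isSubcoalgebra_iff.2 fun h hh f => ⟨mem_orth.2 fun x hx => ?_, mem_orth.2 fun x hx => ?_⟩
  · rw [hr.apply_antipode_mul_hitL]
    exact mem_orth.1 hh _ (isSubcoalgebra_iff.1 hX x hx f).2
  · rw [hl.apply_mul_hitR, hitR_antipode]
    exact mem_orth.1 hh _ (isSubcoalgebra_iff.1 hX x hx _).1

include hl hr h1 in
theorem IsSubcoalgebra.isCompl_orth {X : Submodule k H} (hX : IsSubcoalgebra k H X) :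
    IsCompl X (MackeyPaper.orth χ X) := by
  have hd : X ⊓ MackeyPaper.orth χ X = ⊥ := by
    have hN := hX.inf (hX.orth hl hr)
    have hε (n : H) (hn : n ∈ X ⊓ MackeyPaper.orth χ X) : counit (R := k) n = 0 := by
      obtain ⟨r, hl', hr'⟩ := hN.exists_repr hn
      have := congrArg χ (sum_antipode_mul_eq_algebraMap_counit r)
      rw [map_sum, Finset.sum_eq_zero fun i _ => mem_orth.1 (hr' i).2 _ (hl' i).1,
        Algebra.algebraMap_eq_smul_one, map_smul, h1, smul_eq_mul, mul_one] at this
      exact this.symm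
    refine (Submodule.eq_bot_iff _).2 fun n hn => eq_of_forall_dual (F := k) fun f => ?_
    rw [← counit_hitL, hε _ (isSubcoalgebra_iff.1 hN n hn f).1, map_zero]
  refine ⟨disjoint_iff.2 hd, codisjoint_iff.2 ?_⟩
  refine Submodule.eq_top_of_finrank_eq (le_antisymm (Submodule.finrank_le _) ?_)
  have h2 := Submodule.finrank_sup_add_finrank_inf_eq X (MackeyPaper.orth χ X)
  rw [hd, finrank_bot, add_zero] at h2
  have h3 := LinearMap.finrank_range_add_finrank_ker
    (((LinearMap.mul k H).compr₂ χ ∘ₗ antipode k ∘ₗ X.subtype).flip)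
  have h4 := Submodule.finrank_le (LinearMap.range
    (((LinearMap.mul k H).compr₂ χ ∘ₗ antipode k ∘ₗ X.subtype).flip))
  have h5 : Module.finrank k (X →ₗ[k] k) = Module.finrank k X := Subspace.dual_finrank_eq
  rw [h2, ← h3, ← h5]
  exact Nat.add_le_add_right h4 _

include hl hr h1 in
theorem IsSubcoalgebra.eq_sSup_simple {X : Submodule k H} (hX : IsSubcoalgebra k H X) :
    X = sSup {D | IsSimpleSubcoalgebra k H D ∧ D ≤ X} := by
  set Y := sSup {D | IsSimpleSubcoalgebra k H D ∧ D ≤ X} with hY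
  have hYX : Y ≤ X := sSup_le fun D hD => hD.2
  have hYc : IsSubcoalgebra k H Y := isSubcoalgebra_sSup fun D hD => hD.1.1
  have hcompl := hYc.isCompl_orth hl hr h1
  have h0 : MackeyPaper.orth χ Y ⊓ X = ⊥ := by
    by_contra h
    obtain ⟨D, hD, hD'⟩ := ((hYc.orth hl hr).inf hX).exists_simple_le h
    exact hD'.2.1 (eq_bot_iff.2 (hcompl.disjoint (le_sSup ⟨hD', hD.trans inf_le_right⟩)
      (hD.trans inf_le_left)))
  have := sup_inf_assoc_of_le (MackeyPaper.orth χ Y) hYX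
  rwa [hcompl.sup_eq_top, top_inf_eq, h0, sup_bot_eq] at this

include hr in
theorem IsSubcoalgebra.le_orth_of_disjoint {C X : Submodule k H} (hC : IsSubcoalgebra k H C)
    (hX : IsSubcoalgebra k H X) (h : Disjoint C X) : C ≤ MackeyPaper.orth χ X := by
  refine fun c hc => mem_orth.2 fun x hx => ?_
  let α : H →ₗ[k] k := χ ∘ₗ LinearMap.mulLeft k (antipode k x)
  let β : H →ₗ[k] k := χ ∘ₗ LinearMap.mulRight k c ∘ₗ antipode k
  have heq : hitR α c = hitL β x := eq_of_forall_dual (F := k) fun f => by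
    exact (apply_hitR f α c).trans
      ((hr.apply_antipode_mul_hitL f x c).trans (apply_hitR β f x))
  have h0 : hitR α c = 0 := Submodule.disjoint_def.1 h _ (isSubcoalgebra_iff.1 hC c hc α).2
    (heq ▸ (isSubcoalgebra_iff.1 hX x hx β).1)
  change α c = 0
  rw [← counit_hitR, h0, map_zero]

end Subcoalgebras

section Normality

open CoalgebraStruct (comul counit)
open HopfAlgebra

variable {k : Type} [Field k] {H : Type} [Ring H] [HopfAlgebra k H]

theorem adActL_repr {ι : Type*} {h : H} (r : Coalgebra.Repr k h ι) (x : H) :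
    adActL k H h x = ∑ i ∈ r.index, r.left i * x * antipode k (r.right i) := by
  simp [adActL, ← r.eq]

theorem adActR_repr {ι : Type*} {h : H} (r : Coalgebra.Repr k h ι) (x : H) :
    adActR k H h x = ∑ i ∈ r.index, antipode k (r.left i) * x * r.right i := by
  simp [adActR, ← r.eq, mul_assoc]

open WithConv in
theorem mul_eq_sum_adActL_mul {ι : Type*} {c : H} (r : Coalgebra.Repr k c ι) (x : H) :
    c * x = ∑ i ∈ r.index, adActL k H (r.left i) x * r.right i := by
  have had : toConv ((adActL k H).flip x) =
      toConv (LinearMap.mulRight k x) * toConv (antipode k) := by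
    ext h
    rw [(Coalgebra.Repr.arbitrary k h).convMul_apply]
    simpa using adActL_repr (Coalgebra.Repr.arbitrary k h) x
  have h := congrArg (fun f => f.ofConv c) (mul_assoc (toConv (LinearMap.mulRight k x))
    (toConv (antipode k)) (toConv LinearMap.id))
  simp only [LinearMap.antipode_mul_id, mul_one, ← had] at h
  rw [r.convMul_apply] at h
  exact h.symm

open WithConv in
theorem mul_eq_sum_mul_adActR {ι : Type*} {c : H} (r : Coalgebra.Repr k c ι) (x : H) :
    x * c = ∑ i ∈ r.index, r.left i * adActR k H (r.right i) x := by
  have had : toConv ((adActR k H).flip x) =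
      toConv (antipode k) * toConv (LinearMap.mulLeft k x) := by
    ext h
    rw [(Coalgebra.Repr.arbitrary k h).convMul_apply]
    simpa [mul_assoc] using adActR_repr (Coalgebra.Repr.arbitrary k h) x
  have h := congrArg (fun f => f.ofConv c) (mul_assoc (toConv LinearMap.id)
    (toConv (antipode k)) (toConv (LinearMap.mulLeft k x)))
  simp only [LinearMap.id_mul_antipode, one_mul, ← had] at h
  rw [r.convMul_apply] at h
  exact h

theorem counit_adActR (h x : H) :
    counit (R := k) (adActR k H h x) = counit (R := k) h * counit (R := k) x := by
  let r := Coalgebra.Repr.arbitrary k h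
  have := congrArg (counit (R := k)) (Coalgebra.sum_counit_smul r)
  rw [adActR_repr r, ← this]
  simp [Finset.sum_mul, mul_right_comm]

variable {K : Subalgebra k H}

theorem IsNormalHopfSubalgebra.mul_toSubmodule (hK : IsNormalHopfSubalgebra k H K)
    {C : Submodule k H} (hC : IsSubcoalgebra k H C) :
    K.toSubmodule * C = C * K.toSubmodule := by
  refine le_antisymm (Submodule.mul_le.2 fun x hx c hc => ?_)
    (Submodule.mul_le.2 fun c hc x hx => ?_)
  · obtain ⟨r, hl, -⟩ := hC.exists_repr hc
    rw [mul_eq_sum_mul_adActR r]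
    exact sum_mem fun i _ => Submodule.mul_mem_mul (hl i) (hK.2 _ x hx).2
  · obtain ⟨r, -, hr⟩ := hC.exists_repr hc
    rw [mul_eq_sum_adActL_mul r]
    exact sum_mem fun i _ => Submodule.mul_mem_mul (hK.2 _ x hx).1 (hr i)

theorem IsNormalHopfSubalgebra.mul_mul_integral (hK : IsNormalHopfSubalgebra k H K) {Λ : H}
    (hΛ : IsIdempotentIntegral k H K Λ) {d : H} (hd : d ∈ K) (c : H) :
    d * (c * Λ) = counit (R := k) d • (c * Λ) := by
  let r := Coalgebra.Repr.arbitrary k c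
  have hc := congrArg (· * Λ) ((hitL_repr r counit).symm.trans (hitL_counit c))
  rw [← mul_assoc, mul_eq_sum_mul_adActR r, Finset.sum_mul, ← hc, Finset.sum_mul,
    Finset.smul_sum]
  refine Finset.sum_congr rfl fun i _ => ?_
  rw [mul_assoc, (hΛ.2.2 _ (hK.2 _ d hd).2).1, counit_adActR]
  simp [smul_smul, mul_comm]

theorem le_mul_toSubmodule (C : Submodule k H) : C ≤ C * K.toSubmodule := fun c hc => by
  simpa using Submodule.mul_mem_mul hc (K.mem_toSubmodule.2 (one_mem K))

theorem mul_toSubmodule_le {D X : Submodule k H} (hX : X * K.toSubmodule ≤ X) (hD : D ≤ X) :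
    D * K.toSubmodule ≤ X := (mul_le_mul_left hD _).trans hX

theorem mul_toSubmodule_mul_toSubmodule (C : Submodule k H) :
    C * K.toSubmodule * K.toSubmodule = C * K.toSubmodule := by
  rw [mul_assoc, K.isIdempotentElem_toSubmodule.eq]

variable [FiniteDimensional k H]

theorem IsNormalHopfSubalgebra.le_conjK {χ : H →ₗ[k] k} (hl : IsLeftInt χ) (hr : IsRightInt χ)
    (h1 : χ 1 = 1) (hK : IsNormalHopfSubalgebra k H K) {Λ : H}
    (hΛ : IsIdempotentIntegral k H K Λ) (C : Submodule k H) :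
    K.toSubmodule ≤ conjK k H K Λ C := by
  rw [hK.1.1.eq_sSup_simple hl hr h1]
  exact sSup_le fun D hD => le_sSup ⟨hD.1, fun d hd _ c _ _ => hK.mul_mul_integral hΛ (hD.2 hd) c⟩

theorem IsHopfSubalgebra.mul_orth_le (hK : IsHopfSubalgebra k H K)
    (hS : Function.Injective (antipode k (A := H))) (χ : H →ₗ[k] k) {X : Submodule k H}
    (hX : K.toSubmodule * X ≤ X) : K.toSubmodule * orth χ X ≤ orth χ X := by
  let s : K.toSubmodule →ₗ[k] K.toSubmodule := (antipode k (A := H)).restrict hK.2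
  have hs : Function.Surjective s := LinearMap.injective_iff_surjective.1 fun x y hxy =>
    Subtype.ext (hS (congrArg Subtype.val hxy))
  refine Submodule.mul_le.2 fun a ha h hh => mem_orth.2 fun x hx => ?_
  obtain ⟨b, hb⟩ := hs ⟨a, ha⟩
  have hab : antipode k (b : H) = a := congrArg Subtype.val hb
  rw [← hab, ← mul_assoc, ← antipode_mul_antidistrib]
  exact mem_orth.1 hh _ (hX (Submodule.mul_mem_mul b.2 hx))

theorem IsSimpleSubcoalgebra.le_or_le_orth {χ : H →ₗ[k] k} (hr : IsRightInt χ)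
    {D X : Submodule k H} (hD : IsSimpleSubcoalgebra k H D) (hX : IsSubcoalgebra k H X) :
    D ≤ X ∨ D ≤ orth χ X := by
  refine or_iff_not_imp_right.2 fun h => inf_eq_left.1 (hD.2.2 _ inf_le_left (hD.1.inf hX) ?_)
  exact fun h0 => h (hD.1.le_orth_of_disjoint hr hX (disjoint_iff.2 h0))

/-- Distinct cosets of simple subcoalgebras modulo a normal Hopf subalgebra are orthogonal. -/
theorem IsNormalHopfSubalgebra.coset_eq_or_le_orth {χ : H →ₗ[k] k} (hl : IsLeftInt χ)
    (hr : IsRightInt χ) (h1 : χ 1 = 1) (hS : Function.Injective (antipode k (A := H)))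
    (hK : IsNormalHopfSubalgebra k H K) {C D : Submodule k H}
    (hC : IsSimpleSubcoalgebra k H C) (hD : IsSimpleSubcoalgebra k H D) :
    C * K.toSubmodule = D * K.toSubmodule ∨
      D * K.toSubmodule ≤ orth χ (C * K.toSubmodule) := by
  have hsub {E : Submodule k H} (hE : IsSimpleSubcoalgebra k H E) := hE.1.mul hK.1.1
  have horth {E : Submodule k H} (hE : IsSimpleSubcoalgebra k H E) :
      orth χ (E * K.toSubmodule) * K.toSubmodule ≤ orth χ (E * K.toSubmodule) := by
    rw [← hK.mul_toSubmodule ((hsub hE).orth hl hr)]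
    refine hK.1.mul_orth_le hS χ ?_
    rw [hK.mul_toSubmodule (hsub hE), mul_toSubmodule_mul_toSubmodule]
  rcases hD.le_or_le_orth hr (hsub hC) with hDC | hDC
  · rcases hC.le_or_le_orth hr (hsub hD) with hCD | hCD
    · exact .inl (le_antisymm (mul_toSubmodule_le (mul_toSubmodule_mul_toSubmodule D).le hCD)
        (mul_toSubmodule_le (mul_toSubmodule_mul_toSubmodule C).le hDC))
    · refine absurd (eq_bot_iff.2 ?_) hD.2.1
      exact ((hsub hD).isCompl_orth hl hr h1).disjoint (le_mul_toSubmodule D)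
        (hDC.trans (mul_toSubmodule_le (horth hD) hCD))
  · exact .inr (mul_toSubmodule_le (horth hC) hDC)

theorem IsNormalHopfSubalgebra.isInternal_cosets {χ : H →ₗ[k] k} (hl : IsLeftInt χ)
    (hr : IsRightInt χ) (h1 : χ 1 = 1) (hS : Function.Injective (antipode k (A := H)))
    (hK : IsNormalHopfSubalgebra k H K) {ι : Type} [DecidableEq ι] {rep : ι → Submodule k H}
    (hrep : IsDoubleCosetReps k H K K rep) :
    DirectSum.IsInternal fun i => CKsub k H K (rep i) := by
  have hdc (i : ι) : K.toSubmodule * rep i * K.toSubmodule = CKsub k H K (rep i) := by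
    rw [hK.mul_toSubmodule (hrep.1 i).1, mul_toSubmodule_mul_toSubmodule, CKsub]
  refine DirectSum.isInternal_submodule_of_iSupIndep_of_iSup_eq_top (fun i => ?_) ?_
  · refine (((hrep.1 i).1.mul hK.1.1).isCompl_orth hl hr h1).disjoint.mono_right
      (iSup₂_le fun j hj => ?_)
    refine (hK.coset_eq_or_le_orth hl hr h1 hS (hrep.1 i) (hrep.1 j)).resolve_left fun h => ?_
    exact hj (hrep.2.1 i j (by rw [hdc, hdc]; exact h)).symm
  · rw [eq_top_iff, isSubcoalgebra_top.eq_sSup_simple hl hr h1]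
    refine sSup_le fun D hD => ?_
    obtain ⟨i, hi⟩ := hrep.2.2 D hD.1
    exact (hi.trans (hdc i).le).trans (le_iSup (fun i => CKsub k H K (rep i)) i)

end Normality

section Mackey

variable {k : Type} [Field k] {H : Type} [Ring H] [HopfAlgebra k H]
  {K : Subalgebra k H} {M : Type v} [AddCommGroup M] [Module k M] [Module ↥K M]

theorem ind_mk_mul_tmul (h : H) (a : K) (m : M) :
    (Submodule.Quotient.mk ((h * a) ⊗ₜ[k] m) : Ind k H K M) =
      Submodule.Quotient.mk (h ⊗ₜ[k] (a • m)) := by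
  refine (Submodule.Quotient.eq _).2 ?_
  have := (indRel k H K M).smul_mem h (Submodule.subset_span ⟨a, m, rfl⟩)
  simpa [smul_sub, TensorProduct.smul_tmul'] using this

/-- The left multiplication map `l ⊗ (x ⊗ m) ↦ lx ⊗ m` from a Mackey component. -/
def compToInd (Λ : H) (C : Submodule k H) : Comp k H K K Λ C M →ₗ[k] Ind k H K M :=
  (compRel k H K K Λ C M).liftQ
    (((indRel k H K M).mkQ.restrictScalars k) ∘ₗ
      (LinearMap.mul' k H ∘ₗ
        TensorProduct.map K.toSubmodule.subtype (CKsub k H K C).subtype).rTensor M ∘ₗ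
      (TensorProduct.assoc k K.toSubmodule (CKsub k H K C) M).symm.toLinearMap) <| by
    refine Submodule.span_le.2 ?_
    rintro _ (⟨l, a, haL, -, x, m, hax, rfl⟩ | ⟨l, x, a, m, hxa, rfl⟩)
    · rw [SetLike.mem_coe, LinearMap.mem_ker, map_sub, sub_eq_zero]
      change (Submodule.Quotient.mk (((l * a : H) * x) ⊗ₜ[k] m) : Ind k H K M) =
        Submodule.Quotient.mk ((l * (a * x) : H) ⊗ₜ[k] m)
      rw [mul_assoc]
    · rw [SetLike.mem_coe, LinearMap.mem_ker, map_sub, sub_eq_zero]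
      change (Submodule.Quotient.mk ((l * (x * a) : H) ⊗ₜ[k] m) : Ind k H K M) =
        Submodule.Quotient.mk ((l * x : H) ⊗ₜ[k] (a • m))
      rw [← mul_assoc, ind_mk_mul_tmul]

theorem compToInd_mk (Λ : H) (C : Submodule k H) (l : K) (x : CKsub k H K C) (m : M) :
    compToInd Λ C (Submodule.Quotient.mk (lcmk k H K K C M l (ckmk k H K M C x m))) =
      Submodule.Quotient.mk ((l * x : H) ⊗ₜ[k] m) := rfl

/-- The map `x ⊗ m ↦ 1 ⊗ (x ⊗ m)` to a Mackey component. -/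
def toComp (Λ : H) (C : Submodule k H) :
    CKsub k H K C →ₗ[k] M →ₗ[k] Comp k H K K Λ C M :=
  TensorProduct.curry
    ((compRel k H K K Λ C M).mkQ ∘ₗ TensorProduct.mk k K (CKM k H K M C) 1)

theorem toComp_apply (Λ : H) (C : Submodule k H) (x : CKsub k H K C) (m : M) :
    toComp Λ C x m =
      Submodule.Quotient.mk (lcmk k H K K C M 1 (ckmk k H K M C x m)) := rfl

theorem toComp_mul (Λ : H) (C : Submodule k H) (x : CKsub k H K C) (a : K) (m : M)
    (hxa : (x : H) * a ∈ CKsub k H K C) :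
    toComp Λ C ⟨x * a, hxa⟩ m = toComp Λ C x (a • m) :=
  (Submodule.Quotient.eq _).2 (Submodule.subset_span (.inr ⟨1, x, a, m, hxa, rfl⟩))

theorem toComp_mul_left {Λ : H} {C : Submodule k H} (hC : K.toSubmodule ≤ conjK k H K Λ C)
    (l : K) (x : CKsub k H K C) (m : M) (hlx : (l : H) * x ∈ CKsub k H K C) :
    toComp Λ C ⟨l * x, hlx⟩ m =
      Submodule.Quotient.mk (lcmk k H K K C M l (ckmk k H K M C x m)) := by
  have hl : (⟨((1 : K) : H) * l, mul_mem (1 : K).2 l.2⟩ : K) = l := Subtype.ext (one_mul _)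
  conv_rhs => rw [← hl]
  exact ((Submodule.Quotient.eq _).2
    (Submodule.subset_span (.inl ⟨1, l, l.2, hC l.2, x, m, hlx, rfl⟩))).symm

theorem comp_hom_ext {Λ : H} {C : Submodule k H} {N : Type*} [AddCommGroup N] [Module k N]
    {f g : Comp k H K K Λ C M →ₗ[k] N}
    (h : ∀ l x m, f (Submodule.Quotient.mk (lcmk k H K K C M l (ckmk k H K M C x m))) =
      g (Submodule.Quotient.mk (lcmk k H K K C M l (ckmk k H K M C x m)))) : f = g :=
  Submodule.linearMap_qext _ <| TensorProduct.ext <| LinearMap.ext fun l =>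
    TensorProduct.ext <| LinearMap.ext fun x => LinearMap.ext fun m => h l x m

variable {ι : Type} [DecidableEq ι] {rep : ι → Submodule k H}

open DirectSum

/-- The map `H ⊗ M → ⨁ Comp` sending `x ⊗ m`, for `x` in a coset, to `1 ⊗ (x ⊗ m)`. -/
def tensorToComps (Λ : H) (M : Type v) [AddCommGroup M] [Module k M] [Module ↥K M]
    (hint : DirectSum.IsInternal fun i => CKsub k H K (rep i)) :
    H ⊗[k] M →ₗ[k] ⨁ i, Comp k H K K Λ (rep i) M :=
  TensorProduct.lift <| DirectSum.toModule k ι _ (fun i => (toComp Λ (rep i)).compr₂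
      (DirectSum.lof k ι (fun i => Comp k H K K Λ (rep i) M) i)) ∘ₗ
    (LinearEquiv.ofBijective (DirectSum.coeLinearMap fun i => CKsub k H K (rep i))
      hint).symm.toLinearMap

theorem tensorToComps_tmul (Λ : H) (hint : DirectSum.IsInternal fun i => CKsub k H K (rep i))
    {i : ι} (x : CKsub k H K (rep i)) (m : M) :
    tensorToComps Λ M hint ((x : H) ⊗ₜ m) =
      DirectSum.lof k ι (fun i => Comp k H K K Λ (rep i) M) i (toComp Λ (rep i) x m) := by
  have hx : (LinearEquiv.ofBijective (DirectSum.coeLinearMap fun i => CKsub k H K (rep i))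
      hint).symm x = DirectSum.lof k ι (fun i => CKsub k H K (rep i)) i x :=
    (LinearEquiv.symm_apply_eq _).2
      (DirectSum.coeLinearMap_lof (fun i => CKsub k H K (rep i)) i x).symm
  simp [tensorToComps, hx]

theorem tensorToComps_mul_tmul (Λ : H)
    (hint : DirectSum.IsInternal fun i => CKsub k H K (rep i))
    (hmul : ∀ i, ∀ x ∈ CKsub k H K (rep i), ∀ a ∈ K, x * a ∈ CKsub k H K (rep i))
    (h : H) (a : K) (m : M) :
    tensorToComps Λ M hint ((h * a) ⊗ₜ m) = tensorToComps Λ M hint (h ⊗ₜ (a • m)) := by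
  have hh : h ∈ ⨆ i, CKsub k H K (rep i) := hint.submodule_iSup_eq_top ▸ Submodule.mem_top
  induction hh using Submodule.iSup_induction' with
  | mem i x hx =>
    have h1 := tensorToComps_tmul Λ hint ⟨x * a, hmul i x hx a a.2⟩ m
    have h2 := tensorToComps_tmul Λ hint ⟨x, hx⟩ (a • m)
    rw [← toComp_mul Λ (rep i) ⟨x, hx⟩ a m (hmul i x hx a a.2)] at h2
    exact h1.trans h2.symm
  | zero => simp
  | add x y _ _ hx hy => rw [add_mul, TensorProduct.add_tmul, map_add, hx, hy, ← map_add,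
      ← TensorProduct.add_tmul]

/-- The inverse of the Mackey map. -/
def indToComps (Λ : H) (hint : DirectSum.IsInternal fun i => CKsub k H K (rep i))
    (hmul : ∀ i, ∀ x ∈ CKsub k H K (rep i), ∀ a ∈ K, x * a ∈ CKsub k H K (rep i)) :
    Ind k H K M →ₗ[k] ⨁ i, Comp k H K K Λ (rep i) M :=
  ((indRel k H K M).restrictScalars k).liftQ (tensorToComps Λ M hint) <| by
    intro z hz
    suffices ∀ h : H, tensorToComps Λ M hint (h • z) = 0 by simpa using this 1
    refine Submodule.span_induction (p := fun z _ => ∀ h : H,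
      tensorToComps Λ M hint (h • z) = 0) ?_ ?_ ?_ ?_ hz
    · rintro _ ⟨a, m, rfl⟩ h
      rw [smul_sub, TensorProduct.smul_tmul', TensorProduct.smul_tmul', smul_eq_mul,
        smul_eq_mul, mul_one, map_sub, tensorToComps_mul_tmul Λ hint hmul, sub_self]
    · simp
    · intro x y _ _ hx hy h
      rw [smul_add, map_add, hx, hy, add_zero]
    · intro b x _ hx h
      rw [smul_smul, hx]

theorem indToComps_mk (Λ : H) (hint : DirectSum.IsInternal fun i => CKsub k H K (rep i))
    (hmul : ∀ i, ∀ x ∈ CKsub k H K (rep i), ∀ a ∈ K, x * a ∈ CKsub k H K (rep i))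
    {i : ι} {x : H} (hx : x ∈ CKsub k H K (rep i)) (m : M) :
    indToComps Λ hint hmul (Submodule.Quotient.mk (x ⊗ₜ[k] m)) =
      DirectSum.lof k ι (fun i => Comp k H K K Λ (rep i) M) i (toComp Λ (rep i) ⟨x, hx⟩ m) :=
  tensorToComps_tmul Λ hint ⟨x, hx⟩ m

theorem bijective_toModule_compToInd {Λ : H}
    (hint : DirectSum.IsInternal fun i => CKsub k H K (rep i))
    (hmul : ∀ i, ∀ x ∈ CKsub k H K (rep i), ∀ a ∈ K, x * a ∈ CKsub k H K (rep i))
    (hmul' : ∀ i, ∀ x ∈ CKsub k H K (rep i), ∀ a ∈ K, a * x ∈ CKsub k H K (rep i))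
    (hconj : ∀ i, K.toSubmodule ≤ conjK k H K Λ (rep i)) :
    Function.Bijective (DirectSum.toModule k ι (Ind k H K M)
      fun i => compToInd (M := M) Λ (rep i)) := by
  refine Function.bijective_iff_has_inverse.2 ⟨indToComps Λ hint hmul, ?_, ?_⟩
  · refine LinearMap.congr_fun (f := indToComps Λ hint hmul ∘ₗ DirectSum.toModule k ι _
      fun i => compToInd (M := M) Λ (rep i)) (g := LinearMap.id) ?_
    refine DirectSum.linearMap_ext k fun i => comp_hom_ext fun l x m => ?_
    rw [LinearMap.comp_apply, LinearMap.comp_apply, DirectSum.toModule_lof, compToInd_mk,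
      indToComps_mk Λ hint hmul (hmul' i x x.2 l l.2), toComp_mul_left (hconj i)]
    rfl
  · intro z
    obtain ⟨z, rfl⟩ := Submodule.Quotient.mk_surjective _ z
    induction z with
    | zero => simp
    | add x y hx hy => rw [Submodule.Quotient.mk_add, map_add, map_add, hx, hy]
    | tmul h m =>
      have hh : h ∈ ⨆ i, CKsub k H K (rep i) := hint.submodule_iSup_eq_top ▸ Submodule.mem_top
      induction hh using Submodule.iSup_induction' with
      | mem i x hx =>
        rw [indToComps_mk Λ hint hmul hx, DirectSum.toModule_lof, toComp_apply, compToInd_mk]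
        simp
      | zero => simp
      | add x y _ _ hx hy =>
        rw [TensorProduct.add_tmul, Submodule.Quotient.mk_add, map_add, map_add, hx, hy]

end Mackey

variable [FiniteDimensional k H] [IsSemisimpleRing H]

/-- Proposition 67: if `K` is a normal Hopf subalgebra of the
semisimple Hopf algebra `H`, then `(K, K)` is a Mackey pair of Hopf
subalgebras of `H`. -/
theorem statement_17 (K : Subalgebra k H) (hK : IsNormalHopfSubalgebra k H K)
    (Λ : H) (hΛ : IsIdempotentIntegral k H K Λ) :
    IsMackeyPair.{v} k H K K Λ := by
  obtain ⟨χ, hl, hr, h1⟩ := exists_haar k H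
  intro M _ _ _ _ _ ι _ rep hrep
  have hmul (i : ι) (x : H) (hx : x ∈ CKsub k H K (rep i)) (a : H) (ha : a ∈ K) :
      x * a ∈ CKsub k H K (rep i) :=
    (mul_toSubmodule_mul_toSubmodule (rep i)).le (Submodule.mul_mem_mul hx ha)
  have hmul' (i : ι) (x : H) (hx : x ∈ CKsub k H K (rep i)) (a : H) (ha : a ∈ K) :
      a * x ∈ CKsub k H K (rep i) := by
    refine (mul_toSubmodule_mul_toSubmodule (rep i)).le ?_
    rw [← hK.mul_toSubmodule ((hrep.1 i).1.mul hK.1.1)]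
    exact Submodule.mul_mem_mul ha hx
  refine ⟨_, bijective_toModule_compToInd
    (hK.isInternal_cosets hl hr h1 antipode_injective hrep) hmul hmul'
    fun i => hK.le_conjK hl hr h1 hΛ (rep i), fun i l x m => ?_⟩
  exact (DirectSum.toModule_lof k i _).trans (compToInd_mk Λ (rep i) l x m)

end Statements

end

end MackeyPaper
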